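/- arXiv:2001.08549 — 2 statements merged into one kernel-verified Lean document; each statement's English description precedes it below -/
import Mathlib

section
/- Fix α ∈ (0,1). For every ε > 0 there exists N such that for all n ≥ N, the Dushnik–Miller dimension of the divisibility poset on the set of integers in (n^α, n] satisfies ((1−α)²/16 − ε)·(log n)²/(log log n)² ≤ dim(D_{(n^α, n]}) ≤ (4 + ε)·(log n)²/(log log n). -/
/-- The Dushnik-Miller dimension of the divisibility poset on a set `S ⊆ ℕ`:
the least `d` such that there is an order embedding of `(S, ∣)` into `ℝ^d`
with the componentwise order. -/
noncomputable def divDim (S : Set ℕ) : ℕ :=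
  sInf {d : ℕ | ∃ f : ℕ → (Fin d → ℝ), ∀ a ∈ S, ∀ b ∈ S, (f a ≤ f b ↔ a ∣ b)}

/-!
Upper bound: if every integer up to `n` has at most `k` prime factors in a set `Q` of primes, then
all comparisons of exponents at primes of `Q` are detected by a family of orders of `Q` in which
any `q ∈ Q` is, at least once, above any `k` given others; about `k² log |Q|` random orders form
such a family. The primes up to `(log n) ^ c`, with `c < 2`, get one coordinate each. For the block
`(e ^ x, e ^ (2 * x)]` one can take `k = (log n) / x`, at a cost of about `2 * (log n)² / x`, and
the costs of the successive blocks form a geometric series.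

Lower bound: comparing `a * q` with `a * ∏ p ∈ B, p`, where `a = ⌊n ^ α⌋ + 1` and the primes are at
most `(log n)²`, each coordinate of an embedding orders these primes, and again every prime must be
above any `2 * m - 2` others in one of these orders. By Dushnik this needs more than `m² - m` orders
as soon as there are `m²` primes, and `m` can be as large as `(1 - α) / 4 * log n / log (log n)`.
-/

open Filter Finset
open scoped Topology

/-- `ℝ^d` with the componentwise order contains a copy of the divisibility poset on `S`. -/
def DivEmbeds (S : Set ℕ) (d : ℕ) : Prop :=
  ∃ f : ℕ → (Fin d → ℝ), ∀ a ∈ S, ∀ b ∈ S, (f a ≤ f b ↔ a ∣ b)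

lemma DivEmbeds.mono {S T : Set ℕ} {d : ℕ} (hST : S ⊆ T) : DivEmbeds T d → DivEmbeds S d :=
  fun ⟨f, hf⟩ ↦ ⟨f, fun a ha b hb ↦ hf a (hST ha) b (hST hb)⟩

lemma DivEmbeds.divDim_le {S : Set ℕ} {d : ℕ} (h : DivEmbeds S d) : divDim S ≤ d :=
  Nat.sInf_le h

open Classical in
lemma divEmbeds_card (S : Finset ℕ) : DivEmbeds S #S := by
  refine ⟨fun a i ↦ if (S.equivFin.symm i : ℕ) ∣ a then 1 else 0, fun a ha b _ ↦ ⟨?_, ?_⟩⟩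
  · intro hab
    by_contra hndvd
    have := hab (S.equivFin ⟨a, ha⟩)
    simp only [Equiv.symm_apply_apply, dvd_refl, if_true, hndvd, if_false] at this
    exact absurd this (by norm_num)
  · intro hab i
    by_cases hi : (S.equivFin.symm i : ℕ) ∣ a
    · simp only [hi, hi.trans hab, if_true, le_refl]
    · simp only [hi, if_false]
      positivity

lemma divEmbeds_divDim {S : Set ℕ} (hS : S.Finite) : DivEmbeds S (divDim S) := by
  lift S to Finset ℕ using hS
  exact Nat.sInf_mem (s := {d | DivEmbeds S d}) ⟨#S, divEmbeds_card S⟩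

section Suitable

variable {α β ι : Type*}

/-- Dushnik's suitable families: for any `q ∈ Q` and any `k` other elements of `Q`, some `L i` puts
`q` above all of them. The `L i` need not be injective, so they are only linear preorders. -/
def IsSuitable [LT β] (Q : Finset α) (k : ℕ) (L : ι → α → β) : Prop :=
  ∀ q ∈ Q, ∀ B ⊆ Q, #B ≤ k → q ∉ B → ∃ i, ∀ b ∈ B, L i b < L i q

/-- The first-moment method: a random `t`-tuple in `Y` fails to hit a given `x` with probability at
most `(1 - p) ^ t`. -/
lemma exists_tuple_of_one_sub_pow_mul_card_lt_one {X Y : Type*} [Fintype X] [Fintype Y] [Nonempty Y]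
    (R : X → Y → Prop) [∀ x, DecidablePred (R x)] {p : ℝ} {t : ℕ}
    (hp : ∀ x, p * Fintype.card Y ≤ #{y | R x y}) (ht : (1 - p) ^ t * Fintype.card X < 1) :
    ∃ y : Fin t → Y, ∀ x, ∃ i, R x (y i) := by
  classical
  by_contra! hbad
  have hmiss (x : X) : (#{y | ¬ R x y} : ℝ) ≤ (1 - p) * Fintype.card Y := by
    have hadd : (#{y | R x y} + #{y | ¬ R x y} : ℝ) = Fintype.card Y :=
      mod_cast card_filter_add_card_filter_not (s := univ) (R x)
    linarith [hp x]
  have hcover : (univ : Finset (Fin t → Y)) ⊆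
      univ.biUnion fun x ↦ Fintype.piFinset fun _ ↦ {y | ¬ R x y} := by
    intro y _
    simpa only [mem_biUnion, mem_univ, true_and, Fintype.mem_piFinset, mem_filter] using hbad y
  have hY : (0 : ℝ) < (Fintype.card Y : ℝ) ^ t := by
    have := Fintype.card_pos (α := Y)
    positivity
  refine lt_irrefl ((Fintype.card Y : ℝ) ^ t) ?_
  calc (Fintype.card Y : ℝ) ^ t = #(univ : Finset (Fin t → Y)) := by simp
    _ ≤ ∑ x, (#{y | ¬ R x y} : ℝ) ^ t := by
        have := (card_le_card hcover).trans card_biUnion_le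
        simp only [Fintype.card_piFinset_const] at this
        exact_mod_cast this
    _ ≤ ∑ _x : X, ((1 - p) * Fintype.card Y) ^ t := by gcongr with x; exact hmiss x
    _ = (1 - p) ^ t * Fintype.card X * (Fintype.card Y : ℝ) ^ t := by
        rw [sum_const, nsmul_eq_mul, card_univ, mul_pow]
        ring
    _ < (Fintype.card Y : ℝ) ^ t := mul_lt_of_lt_one_left hY ht

/-- Each element of `insert q B` is equally likely to come last in a random permutation. -/
lemma card_perm_le_card_add_one_mul [Fintype α] [LinearOrder α] {B : Finset α} {q : α}
    (hq : q ∉ B) :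
    Fintype.card (Equiv.Perm α) ≤
      (#B + 1) * #{σ : Equiv.Perm α | ∀ b ∈ B, σ b < σ q} := by
  set S := insert q B
  have hqS : q ∈ S := mem_insert_self q B
  let last (x : α) : Finset (Equiv.Perm α) := {σ | ∀ y ∈ S, σ y ≤ σ x}
  have hcover : univ ⊆ S.biUnion last := by
    intro σ _
    obtain ⟨x, hx, hmax⟩ := S.exists_max_image σ ⟨q, hqS⟩
    exact mem_biUnion.2 ⟨x, hx, mem_filter.2 ⟨mem_univ σ, hmax⟩⟩
  have hswap : ∀ x ∈ S, #(last x) ≤ #(last q) := by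
    intro x hx
    refine card_le_card_of_injOn (· * Equiv.swap x q) (fun σ hσ ↦ ?_)
      (mul_left_injective _).injOn
    refine mem_filter.2 ⟨mem_univ _, fun y hy ↦ ?_⟩
    simp only [Equiv.Perm.mul_apply, Equiv.swap_apply_right]
    refine (mem_filter.1 hσ).2 _ ?_
    rw [Equiv.swap_apply_def]
    split_ifs <;> assumption
  have hlast : last q ⊆ ({σ | ∀ b ∈ B, σ b < σ q} : Finset (Equiv.Perm α)) := by
    intro σ hσ
    refine mem_filter.2 ⟨mem_univ σ, fun b hb ↦ ?_⟩
    have hbq : b ≠ q := ne_of_mem_of_not_mem hb hq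
    exact ((mem_filter.1 hσ).2 b (mem_insert_of_mem hb)).lt_of_ne (σ.injective.ne hbq)
  calc Fintype.card (Equiv.Perm α) ≤ #(S.biUnion last) := card_le_card hcover
    _ ≤ #S * #(last q) := card_biUnion_le_card_mul _ _ _ hswap
    _ ≤ _ := Nat.mul_le_mul (card_insert_le q B) (card_le_card hlast)

lemma one_sub_pow_mul_pow_lt_one {p N : ℝ} {s t : ℕ} (hp : p ≤ 1) (hN : 0 < N)
    (h : s * Real.log N < p * t) : (1 - p) ^ t * N ^ s < 1 := by
  calc (1 - p) ^ t * N ^ s ≤ Real.exp (-p) ^ t * Real.exp (Real.log N) ^ s := by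
        rw [Real.exp_log hN]
        gcongr
        exact Real.one_sub_le_exp_neg p
    _ = Real.exp (s * Real.log N - p * t) := by
        rw [← Real.exp_nat_mul, ← Real.exp_nat_mul, ← Real.exp_add]
        ring_nf
    _ < 1 := Real.exp_lt_one_iff.2 (by linarith)

lemma exists_fin_map_of_card_le {Q B : Finset α} {k : ℕ} (hQ : Q.Nonempty) (hBQ : B ⊆ Q)
    (hB : #B ≤ k) : ∃ g : Fin k → Q, ∀ b ∈ B, ∃ j, (g j : α) = b := by
  obtain ⟨e⟩ : Nonempty (B ↪ Fin k) :=
    Function.Embedding.nonempty_of_card_le (by simpa using hB)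
  refine ⟨Function.extend e (fun b ↦ ⟨b, hBQ b.2⟩) fun _ ↦ ⟨_, hQ.choose_spec⟩, fun b hb ↦ ?_⟩
  exact ⟨e ⟨b, hb⟩, by rw [e.injective.extend_apply]⟩

lemma exists_isSuitable [LinearOrder α] {Q : Finset α} (hQ : Q.Nonempty) {k t : ℕ}
    (ht : ((k : ℝ) + 1) ^ 2 * Real.log #Q < t) :
    ∃ L : Fin t → α → α, IsSuitable Q k L := by
  classical
  have hk : (0 : ℝ) < k + 1 := by positivity
  let R (x : Q × (Fin k → Q)) (σ : Equiv.Perm Q) : Prop := ∀ j, x.2 j ≠ x.1 → σ (x.2 j) < σ x.1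
  have hcard (x : Q × (Fin k → Q)) :
      ((k : ℝ) + 1)⁻¹ * Fintype.card (Equiv.Perm Q) ≤ #{σ | R x σ} := by
    have himage : #((univ.image x.2).erase x.1) ≤ k :=
      (card_le_card (erase_subset _ _)).trans (card_image_le.trans_eq (card_fin k))
    have hR : ({σ | ∀ b ∈ (univ.image x.2).erase x.1, σ b < σ x.1} : Finset (Equiv.Perm Q)) ⊆
        ({σ | R x σ} : Finset (Equiv.Perm Q)) := by
      intro σ hσ
      exact mem_filter.2 ⟨mem_univ σ, fun j hj ↦
        (mem_filter.1 hσ).2 _ (mem_erase.2 ⟨hj, mem_image_of_mem _ (mem_univ j)⟩)⟩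
    rw [inv_mul_le_iff₀ hk]
    exact_mod_cast (card_perm_le_card_add_one_mul (notMem_erase x.1 _)).trans
      (Nat.mul_le_mul (Nat.succ_le_succ himage) (card_le_card hR))
  have hlt : (1 - ((k : ℝ) + 1)⁻¹) ^ t * Fintype.card (Q × (Fin k → Q)) < 1 := by
    have hX : (Fintype.card (Q × (Fin k → Q)) : ℝ) = (#Q : ℝ) ^ (k + 1) := by
      simp [pow_succ, mul_comm]
    rw [hX]
    refine one_sub_pow_mul_pow_lt_one (inv_le_one_of_one_le₀ (by simp)) (mod_cast hQ.card_pos) ?_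
    rw [lt_inv_mul_iff₀ hk]
    push_cast
    linarith
  obtain ⟨σ, hσ⟩ := exists_tuple_of_one_sub_pow_mul_card_lt_one R hcard hlt
  refine ⟨fun i ↦ Equiv.Perm.ofSubtype (σ i), fun q hq B hBQ hBk hqB ↦ ?_⟩
  obtain ⟨g, hg⟩ := exists_fin_map_of_card_le hQ hBQ hBk
  obtain ⟨i, hi⟩ := hσ (⟨q, hq⟩, g)
  refine ⟨i, fun b hb ↦ ?_⟩
  obtain ⟨j, rfl⟩ := hg b hb
  beta_reduce
  rw [Equiv.Perm.ofSubtype_apply_coe, Equiv.Perm.ofSubtype_apply_of_mem _ hq]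
  have hne : g j ≠ ⟨q, hq⟩ := fun h ↦ hqB (by simpa only [h] using hb)
  exact hi j hne

/-- Dushnik's lower bound for suitable families. If there were few orders, then some `m` elements
of `Q` would not be on top of any of them, and one of these, `u`, would be the highest of the `m` in
at most `m - 1` orders. The other `m - 1` elements together with the tops of those orders then
block `u`. -/
lemma IsSuitable.lt_card [Fintype ι] [LinearOrder β] {Q : Finset α} {L : ι → α → β} {m : ℕ}
    (hL : IsSuitable Q (2 * m - 2) L) (hm : 0 < m) (hQ : m ^ 2 ≤ #Q) :
    m ^ 2 - m < Fintype.card ι := by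
  classical
  by_contra! hι
  have hmm : m ≤ m ^ 2 := Nat.le_self_pow two_ne_zero m
  have hQne : Q.Nonempty := card_pos.1 (by omega)
  choose top htopQ htop using fun i ↦ Q.exists_max_image (L i) hQne
  obtain ⟨U, hU, hUcard⟩ : ∃ U ⊆ Q \ univ.image top, #U = m := by
    refine exists_subset_card_eq ?_
    have htops : #(univ.image top) ≤ Fintype.card ι := card_image_le
    have := le_card_sdiff (univ.image top) Q
    omega
  have hUQ : U ⊆ Q := hU.trans sdiff_subset
  have hUne : U.Nonempty := card_pos.1 (by omega)
  choose high hhighU hhigh using fun i ↦ U.exists_max_image (L i) hUne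
  obtain ⟨u, hu, hufiber⟩ : ∃ u ∈ U, #{i | high i = u} ≤ m - 1 := by
    refine exists_card_fiber_le_of_card_le_mul hUne ?_
    rwa [hUcard, card_univ, Nat.mul_sub_one, ← sq]
  set T := ({i | high i = u} : Finset ι).image top
  have hTQ : T ⊆ Q := image_subset_iff.2 fun i _ ↦ htopQ i
  have hTU : T ⊆ univ.image top := image_subset_image (filter_subset _ _)
  have hcard : #(U.erase u ∪ T) ≤ 2 * m - 2 := by
    have hT : #T ≤ m - 1 := card_image_le.trans hufiber
    have := card_union_le (U.erase u) T
    rw [card_erase_of_mem hu] at this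
    omega
  have hublock : u ∉ U.erase u ∪ T := by
    refine notMem_union.2 ⟨notMem_erase u U, fun huT ↦ ?_⟩
    exact (mem_sdiff.1 (hU hu)).2 (hTU huT)
  obtain ⟨i, hi⟩ := hL u (hUQ hu) _ (union_subset ((erase_subset _ _).trans hUQ) hTQ) hcard hublock
  by_cases hiu : high i = u
  · have hmem : top i ∈ T := mem_image_of_mem top (mem_filter.2 ⟨mem_univ i, hiu⟩)
    exact (hi (top i) (mem_union_right _ hmem)).not_ge (htop i u (hUQ hu))
  · exact (hi (high i) (mem_union_left _ (mem_erase.2 ⟨hiu, hhighU i⟩))).not_ge (hhigh i u hu)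

end Suitable

section Upper

/-- There are `d` functions on `{1, …, n}`, monotone for divisibility, which detect every failure of
`v_q a ≤ v_q b` with `q ∈ Q`. Such families for two sets of primes concatenate, and for `Q`
containing all primes up to `n` they are embeddings. -/
def DetectsFactorization (n : ℕ) (Q : Finset ℕ) (d : ℕ) : Prop :=
  ∃ f : ℕ → Fin d → ℝ, ∀ a ∈ Set.Icc 1 n, ∀ b ∈ Set.Icc 1 n,
    (a ∣ b → f a ≤ f b) ∧ (f a ≤ f b → ∀ q ∈ Q, a.factorization q ≤ b.factorization q)

namespace DetectsFactorization

variable {n d e : ℕ} {Q R : Finset ℕ}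

lemma mono (hQR : Q ⊆ R) : DetectsFactorization n R d → DetectsFactorization n Q d :=
  fun ⟨f, hf⟩ ↦ ⟨f, fun a ha b hb ↦
    ⟨(hf a ha b hb).1, fun hab q hq ↦ (hf a ha b hb).2 hab q (hQR hq)⟩⟩

lemma empty : DetectsFactorization n ∅ 0 :=
  ⟨fun _ ↦ Fin.elim0, fun _ _ _ _ ↦ ⟨fun _ i ↦ i.elim0, fun _ q hq ↦ absurd hq (notMem_empty q)⟩⟩

lemma union : DetectsFactorization n Q d → DetectsFactorization n R e →
    DetectsFactorization n (Q ∪ R) (d + e) := by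
  rintro ⟨f, hf⟩ ⟨g, hg⟩
  have append_le (a b : ℕ) :
      Fin.append (f a) (g a) ≤ Fin.append (f b) (g b) ↔ f a ≤ f b ∧ g a ≤ g b := by
    simp only [Pi.le_def, Fin.forall_fin_add, Fin.append_left, Fin.append_right]
  refine ⟨fun a ↦ Fin.append (f a) (g a), fun a ha b hb ↦ ⟨fun hab ↦ ?_, fun hab q hq ↦ ?_⟩⟩
  · exact (append_le a b).2 ⟨(hf a ha b hb).1 hab, (hg a ha b hb).1 hab⟩
  · obtain ⟨hfab, hgab⟩ := (append_le a b).1 hab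
    exact (mem_union.1 hq).elim ((hf a ha b hb).2 hfab q) ((hg a ha b hb).2 hgab q)

lemma divEmbeds (h : DetectsFactorization n (Icc 1 n) d) : DivEmbeds (Set.Icc 1 n) d := by
  obtain ⟨f, hf⟩ := h
  refine ⟨f, fun a ha b hb ↦ ⟨fun hab ↦ ?_, (hf a ha b hb).1⟩⟩
  rw [← Nat.factorization_le_iff_dvd (Nat.ne_zero_of_lt ha.1)
    (Nat.ne_zero_of_lt hb.1)]
  intro q
  by_cases hq : q ∈ a.primeFactors
  · exact (hf a ha b hb).2 hab q (mem_Icc.2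
      ⟨(Nat.prime_of_mem_primeFactors hq).one_le, (Nat.le_of_mem_primeFactors hq).trans ha.2⟩)
  · rw [← Nat.support_factorization, Finsupp.notMem_support_iff] at hq
    exact hq ▸ Nat.zero_le _

end DetectsFactorization

lemma detectsFactorization_card (n : ℕ) (Q : Finset ℕ) : DetectsFactorization n Q #Q := by
  refine ⟨fun a i ↦ a.factorization (Q.equivFin.symm i), fun a ha b hb ↦
    ⟨fun hab i ↦ ?_, fun hab q hq ↦ ?_⟩⟩
  · exact Nat.cast_le.2 ((Nat.factorization_le_iff_dvd (Nat.ne_zero_of_lt ha.1)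
      (Nat.ne_zero_of_lt hb.1)).2 hab _)
  · have := hab (Q.equivFin ⟨q, hq⟩)
    simpa only [Equiv.symm_apply_apply, Nat.cast_le] using this

lemma sum_mul_pow_lt_pow {α : Type*} {s : Finset α} {c e : α → ℕ} {M l : ℕ}
    (he : ∀ x ∈ s, c x ≠ 0 → e x < l) (hc : ∑ x ∈ s, c x < M) :
    ∑ x ∈ s, c x * M ^ e x < M ^ l := by
  have hM : 0 < M := by omega
  refine lt_of_mul_lt_mul_right ?_ hM.le
  calc (∑ x ∈ s, c x * M ^ e x) * M = ∑ x ∈ s, c x * M ^ (e x + 1) := by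
        simp only [sum_mul, pow_succ, mul_assoc]
    _ ≤ ∑ x ∈ s, c x * M ^ l := by
        refine sum_le_sum fun x hx ↦ ?_
        rcases eq_or_ne (c x) 0 with h | h
        · simp only [h, zero_mul, le_refl]
        · gcongr
          exact he x hx h
    _ = (∑ x ∈ s, c x) * M ^ l := (sum_mul ..).symm
    _ < M * M ^ l := by gcongr
    _ = M ^ l * M := mul_comm ..

/-- Reading the valuations as base-`M` digits placed according to `L i` makes the valuation at the
`L i`-highest prime factor decisive. -/
lemma IsSuitable.detectsFactorization {n k t : ℕ} {Q : Finset ℕ} {L : Fin t → ℕ → ℕ}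
    (hL : IsSuitable Q k L) (hk : ∀ b ∈ Set.Icc 1 n, #(Q ∩ b.primeFactors) ≤ k) :
    DetectsFactorization n Q t := by
  set M := #Q * n + 1
  let F (i : Fin t) (a : ℕ) : ℕ := ∑ q ∈ Q, a.factorization q * M ^ L i q
  refine ⟨fun a i ↦ F i a, fun a ha b hb ↦ ⟨fun hab i ↦ ?_, fun hab q hq ↦ ?_⟩⟩
  · have hle := (Nat.factorization_le_iff_dvd (Nat.ne_zero_of_lt ha.1)
      (Nat.ne_zero_of_lt hb.1)).2 hab
    exact Nat.cast_le.2 (sum_le_sum fun q _ ↦ Nat.mul_le_mul_right _ (hle q))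
  · by_contra! hlt
    obtain ⟨i, hi⟩ := hL q hq ((Q ∩ b.primeFactors).erase q)
      ((erase_subset _ _).trans inter_subset_left)
      ((card_le_card (erase_subset _ _)).trans (hk b hb)) (notMem_erase _ _)
    have hdigits : ∑ x ∈ Q.erase q, b.factorization x < M := by
      have hle : ∀ x ∈ Q.erase q, b.factorization x ≤ n := fun x _ ↦
        (Nat.factorization_lt x (Nat.ne_zero_of_lt hb.1)).le.trans hb.2
      refine Nat.lt_succ_of_le ((sum_le_card_nsmul _ _ n hle).trans ?_)
      exact Nat.mul_le_mul_right n (card_le_card (erase_subset q Q))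
    have hlower : ∑ x ∈ Q.erase q, b.factorization x * M ^ L i x < M ^ L i q := by
      refine sum_mul_pow_lt_pow (fun x hx hxb ↦ hi x ?_) hdigits
      have hxb' : x ∈ b.primeFactors :=
        Nat.support_factorization b ▸ Finsupp.mem_support_iff.2 hxb
      exact mem_erase.2 ⟨ne_of_mem_erase hx, mem_inter.2 ⟨mem_of_mem_erase hx, hxb'⟩⟩
    refine (Nat.cast_le.1 (hab i)).not_gt ?_
    calc F i b = b.factorization q * M ^ L i q
          + ∑ x ∈ Q.erase q, b.factorization x * M ^ L i x := (add_sum_erase _ _ hq).symm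
      _ < (b.factorization q + 1) * M ^ L i q := by rw [add_one_mul]; gcongr
      _ ≤ a.factorization q * M ^ L i q := Nat.mul_le_mul_right _ hlt
      _ ≤ F i a := single_le_sum (f := fun q ↦ a.factorization q * M ^ L i q)
          (fun _ _ ↦ Nat.zero_le _) hq

lemma card_mul_le_log {b : ℕ} {s : Finset ℕ} {x : ℝ} (hb : b ≠ 0) (hs : s ⊆ b.primeFactors)
    (hx : ∀ p ∈ s, Real.exp x ≤ p) : #s * x ≤ Real.log b := by
  have hpos : ∀ p ∈ s, (0 : ℝ) < p := fun p hp ↦ (Real.exp_pos x).trans_le (hx p hp)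
  calc #s * x = #s • x := (nsmul_eq_mul _ _).symm
    _ ≤ ∑ p ∈ s, Real.log p := card_nsmul_le_sum _ _ _ fun p hp ↦
        (Real.le_log_iff_exp_le (hpos p hp)).2 (hx p hp)
    _ = Real.log (∏ p ∈ s, p : ℕ) := by
        rw [Nat.cast_prod, Real.log_prod fun p hp ↦ (hpos p hp).ne']
    _ ≤ Real.log b := by
        refine Real.log_le_log ?_ (mod_cast Nat.le_of_dvd (Nat.pos_of_ne_zero hb) ?_)
        · rw [Nat.cast_prod]
          exact prod_pos hpos
        · exact (prod_dvd_prod_of_subset _ _ _ hs).trans (Nat.prod_primeFactors_dvd b)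

lemma card_Ioc_floor_exp_inter_primeFactors_le {n b N : ℕ} {x : ℝ} (hx : 0 < x)
    (hb : b ∈ Set.Icc 1 n) : #(Ioc ⌊Real.exp x⌋₊ N ∩ b.primeFactors) ≤ ⌊Real.log n / x⌋₊ := by
  have hlarge : ∀ p ∈ Ioc ⌊Real.exp x⌋₊ N ∩ b.primeFactors, Real.exp x ≤ p := fun p hp ↦
    ((Nat.floor_lt (Real.exp_pos x).le).1 (mem_Ioc.1 (mem_inter.1 hp).1).1).le
  refine Nat.le_floor ((le_div_iff₀ hx).2 ?_)
  calc #(Ioc ⌊Real.exp x⌋₊ N ∩ b.primeFactors) * x ≤ Real.log b :=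
        card_mul_le_log (Nat.ne_zero_of_lt hb.1) inter_subset_right hlarge
    _ ≤ Real.log n := Real.log_le_log (mod_cast hb.1) (mod_cast hb.2)

lemma exists_detectsFactorization_Ioc_exp {n : ℕ} {x : ℝ} (hx : 1 ≤ x) (hxn : x ≤ Real.log n) :
    ∃ d : ℕ, (d : ℝ) ≤ 2 * Real.log n ^ 2 / x + 7 * Real.log n ∧
      DetectsFactorization n (Ioc ⌊Real.exp x⌋₊ ⌊Real.exp (2 * x)⌋₊) d := by
  set l := Real.log n
  set Q := Ioc ⌊Real.exp x⌋₊ ⌊Real.exp (2 * x)⌋₊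
  have hx0 : 0 < x := by linarith
  have hl0 : 0 < l := by linarith
  rcases Q.eq_empty_or_nonempty with hQ | hQ
  · exact ⟨0, by rw [Nat.cast_zero]; positivity, hQ ▸ .empty⟩
  have hlogQ : Real.log #Q ≤ 2 * x := by
    rw [Real.log_le_iff_le_exp (mod_cast hQ.card_pos)]
    have hcard : #Q ≤ ⌊Real.exp (2 * x)⌋₊ := (Nat.card_Ioc _ _).trans_le (Nat.sub_le _ _)
    exact (Nat.cast_le.2 hcard).trans (Nat.floor_le (Real.exp_pos _).le)
  set k := ⌊l / x⌋₊
  set t := ((k : ℝ) + 1) ^ 2 * (2 * x)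
  have hsuitable : ((k : ℝ) + 1) ^ 2 * Real.log #Q < (⌊t⌋₊ + 1 : ℕ) := by
    calc ((k : ℝ) + 1) ^ 2 * Real.log #Q ≤ t := mul_le_mul_of_nonneg_left hlogQ (by positivity)
      _ < (⌊t⌋₊ + 1 : ℕ) := mod_cast Nat.lt_floor_add_one t
  obtain ⟨L, hL⟩ := exists_isSuitable hQ hsuitable
  refine ⟨⌊t⌋₊ + 1, ?_,
    hL.detectsFactorization fun _ ↦ card_Ioc_floor_exp_inter_primeFactors_le hx0⟩
  calc ((⌊t⌋₊ + 1 : ℕ) : ℝ) ≤ (k + 1) ^ 2 * (2 * x) + 1 := by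
        push_cast
        gcongr
        exact Nat.floor_le (by positivity)
    _ ≤ (l / x + 1) ^ 2 * (2 * x) + 1 := by
        gcongr
        exact Nat.floor_le (by positivity)
    _ = 2 * l ^ 2 / x + 4 * l + 2 * x + 1 := by
        field_simp
        ring
    _ ≤ 2 * l ^ 2 / x + 7 * l := by linarith

lemma exists_detectsFactorization_Ioc_exp_two_pow {n : ℕ} {x : ℝ} (hx : 1 ≤ x) (I : ℕ)
    (hI : 2 ^ I * x ≤ 2 * Real.log n) :
    ∃ d : ℕ, (d : ℝ) ≤ 4 * Real.log n ^ 2 / x * (1 - 1 / 2 ^ I) + 7 * Real.log n * I ∧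
      DetectsFactorization n (Ioc ⌊Real.exp x⌋₊ ⌊Real.exp (2 ^ I * x)⌋₊) d := by
  induction I with
  | zero => exact ⟨0, by simp, by simpa using .empty⟩
  | succ I ih =>
    have hblock : 2 ^ I * x ≤ Real.log n := by rw [pow_succ] at hI; linarith
    have hx' : x ≤ 2 ^ I * x := le_mul_of_one_le_left (by linarith) (one_le_pow₀ one_le_two)
    obtain ⟨d, hd, hdet⟩ := ih (by linarith)
    obtain ⟨e, he, heet⟩ := exists_detectsFactorization_Ioc_exp (hx.trans hx') hblock
    refine ⟨d + e, ?_, (hdet.union heet).mono ?_⟩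
    · have : x ≠ 0 := by linarith
      push_cast
      refine (add_le_add hd he).trans_eq ?_
      field_simp
      ring
    · rw [pow_succ', mul_assoc, Ioc_union_Ioc_eq_Ioc (by gcongr)]
      exact Nat.floor_le_floor (Real.exp_le_exp.2 (by linarith))

lemma exists_divEmbeds_Icc {n : ℕ} {x : ℝ} (hx : 1 ≤ x) (hxn : x ≤ Real.log n) :
    ∃ d : ℕ, (d : ℝ) ≤ Real.exp x + 4 * Real.log n ^ 2 / x +
        7 * Real.log n * (2 * Real.log (Real.log n) + 2) ∧ DivEmbeds (Set.Icc 1 n) d := by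
  set l := Real.log n
  have hx0 : 0 < x := by linarith
  have hl0 : 0 < l := by linarith
  obtain ⟨j, hj, hj'⟩ := exists_nat_pow_near ((one_le_div hx0).2 hxn) one_lt_two
  have hjx : 2 ^ j * x ≤ l := (le_div_iff₀ hx0).1 hj
  have hlj : l ≤ 2 ^ (j + 1) * x := ((div_lt_iff₀ hx0).1 hj').le
  have hsmall : DetectsFactorization n (Icc 1 ⌊Real.exp x⌋₊) ⌊Real.exp x⌋₊ := by
    simpa only [Nat.card_Icc, Nat.add_sub_cancel] using
      detectsFactorization_card n (Icc 1 ⌊Real.exp x⌋₊)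
  obtain ⟨d, hd, hlarge⟩ :=
    exists_detectsFactorization_Ioc_exp_two_pow hx (j + 1) (by rw [pow_succ]; linarith)
  refine ⟨⌊Real.exp x⌋₊ + d, ?_, ((hsmall.union hlarge).mono fun q hq ↦ ?_).divEmbeds⟩
  · have hfloor : (⌊Real.exp x⌋₊ : ℝ) ≤ Real.exp x := Nat.floor_le (Real.exp_pos x).le
    have hgeom : 4 * l ^ 2 / x * (1 - 1 / 2 ^ (j + 1)) ≤ 4 * l ^ 2 / x :=
      mul_le_of_le_one_right (by positivity) (sub_le_self 1 (by positivity))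
    have hblocks : ((j + 1 : ℕ) : ℝ) ≤ 2 * Real.log l + 2 := by
      have hjl : (2 : ℝ) ^ j ≤ l := le_trans (le_mul_of_one_le_right (by positivity) hx) hjx
      have hlog : j * Real.log 2 ≤ Real.log l := by
        rw [← Real.log_pow]
        exact Real.log_le_log (by positivity) hjl
      push_cast
      nlinarith [Real.log_two_gt_d9, (Nat.cast_nonneg j : (0 : ℝ) ≤ j)]
    have : 7 * l * ((j + 1 : ℕ) : ℝ) ≤ 7 * l * (2 * Real.log l + 2) := by gcongr
    push_cast at *
    linarith
  · have hn : (0 : ℝ) < n := Nat.cast_pos.2 (Nat.pos_of_ne_zero fun h ↦ by simp [l, h] at hl0)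
    have hcover : n ≤ ⌊Real.exp (2 ^ (j + 1) * x)⌋₊ :=
      Nat.le_floor ((Real.log_le_iff_le_exp hn).1 hlj)
    simp only [mem_union, mem_Ioc, mem_Icc] at hq ⊢
    omega

end Upper

lemma tendsto_divEmbeds_bound {c : ℝ} (hc0 : 0 < c) (hc2 : c < 2) :
    Tendsto (fun l : ℝ ↦ (Real.exp (c * Real.log l) + 4 * l ^ 2 / (c * Real.log l) +
      7 * l * (2 * Real.log l + 2)) / (l ^ 2 / Real.log l)) atTop (𝓝 (4 / c)) := by
  have hsmall : Tendsto (fun l : ℝ ↦ Real.log l / l ^ (2 - c)) atTop (𝓝 0) :=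
    (isLittleO_log_rpow_atTop (by linarith)).tendsto_div_nhds_zero
  have hsq : Tendsto (fun l : ℝ ↦ Real.log l ^ 2 / l) atTop (𝓝 0) :=
    Real.isLittleO_pow_log_id_atTop.tendsto_div_nhds_zero
  have hlog : Tendsto (fun l : ℝ ↦ Real.log l / l) atTop (𝓝 0) :=
    Real.isLittleO_log_id_atTop.tendsto_div_nhds_zero
  have hsum := ((hsmall.add_const (4 / c)).add (hsq.const_mul 14)).add (hlog.const_mul 14)
  simp only [mul_zero, zero_add, add_zero] at hsum
  refine hsum.congr' ?_
  filter_upwards [eventually_gt_atTop 1] with l hl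
  have hl0 : 0 < l := by linarith
  have hy : Real.log l ≠ 0 := (Real.log_pos hl).ne'
  have hrpow : Real.exp (c * Real.log l) = l ^ 2 / l ^ (2 - c) := by
    rw [mul_comm, ← Real.rpow_def_of_pos hl0, ← Real.rpow_natCast, ← Real.rpow_sub hl0]
    congr 1
    push_cast
    ring
  have : 0 < l ^ (2 - c) := Real.rpow_pos_of_pos hl0 _
  rw [hrpow]
  field_simp
  ring

lemma tendsto_log_natCast_atTop : Tendsto (fun n : ℕ ↦ Real.log n) atTop atTop :=
  Real.tendsto_log_atTop.comp tendsto_natCast_atTop_atTop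

lemma eventually_divDim_le {C : ℝ} (hC : 2 < C) :
    ∀ᶠ n : ℕ in atTop, ∀ S ⊆ Set.Icc 1 n,
      (divDim S : ℝ) ≤ C * Real.log n ^ 2 / Real.log (Real.log n) := by
  obtain ⟨c, hCc, hc2⟩ := exists_between (show 4 / C < 2 by rw [div_lt_iff₀] <;> linarith)
  have hc0 : 0 < c := lt_trans (by positivity) hCc
  have hlimit : 4 / c < C := (div_lt_comm₀ (by linarith) hc0).1 hCc
  have hx : Tendsto (fun l ↦ c * Real.log l) atTop atTop :=
    Real.tendsto_log_atTop.const_mul_atTop hc0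
  have hxl : ∀ᶠ l in atTop, c * Real.log l ≤ l := by
    filter_upwards [Real.isLittleO_log_id_atTop.bound (inv_pos.2 hc0), eventually_ge_atTop 1]
      with l hl hl1
    rw [Real.norm_of_nonneg (Real.log_nonneg hl1), id, Real.norm_of_nonneg (by linarith)] at hl
    exact (le_inv_mul_iff₀ hc0).1 hl
  filter_upwards [tendsto_log_natCast_atTop.eventually (hx.eventually_ge_atTop 1),
    tendsto_log_natCast_atTop.eventually hxl, tendsto_log_natCast_atTop.eventually_gt_atTop 1,
    tendsto_log_natCast_atTop.eventually
      ((tendsto_divEmbeds_bound hc0 hc2).eventually_le_const hlimit)] with n hx1 hxn hl hbound S hS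
  obtain ⟨d, hd, hembed⟩ := exists_divEmbeds_Icc hx1 hxn
  have hy : 0 < Real.log (Real.log n) := Real.log_pos hl
  calc (divDim S : ℝ) ≤ d := Nat.cast_le.2 (hembed.mono hS).divDim_le
    _ ≤ _ := hd
    _ ≤ C * (Real.log n ^ 2 / Real.log (Real.log n)) := (div_le_iff₀ (by positivity)).1 hbound
    _ = C * Real.log n ^ 2 / Real.log (Real.log n) := (mul_div_assoc ..).symm

/-- The `j`-th coordinate orders the primes `p` by the value at `c * p`; it puts `q` above `B` as
soon as it witnesses that `c * q` does not divide `c * ∏ p ∈ B, p`. -/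
lemma DivEmbeds.exists_isSuitable_primesLE {c n X k d : ℕ} (h : DivEmbeds (Set.Icc c n) d)
    (hc : 0 < c) (hk : 0 < k) (hn : c * X ^ k ≤ n) :
    ∃ L : Fin d → ℕ → ℝ, IsSuitable X.primesLE k L := by
  obtain ⟨f, hf⟩ := h
  refine ⟨fun j p ↦ f (c * p) j, fun q hq B hB hBk hqB ↦ ?_⟩
  have hprime : ∀ p ∈ X.primesLE, p.Prime := fun p hp ↦ (Nat.mem_primesLE.1 hp).2
  have hX : 0 < X := (hprime q hq).pos.trans_le (Nat.mem_primesLE.1 hq).1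
  have hmem : ∀ A ⊆ X.primesLE, #A ≤ k → c * ∏ p ∈ A, p ∈ Set.Icc c n := by
    intro A hA hAk
    refine ⟨Nat.le_mul_of_pos_right c (prod_pos fun p hp ↦ (hprime p (hA hp)).pos), ?_⟩
    calc c * ∏ p ∈ A, p ≤ c * X ^ #A :=
          Nat.mul_le_mul_left c (prod_le_pow_card _ _ _ fun p hp ↦ (Nat.mem_primesLE.1 (hA hp)).1)
      _ ≤ c * X ^ k := by gcongr
      _ ≤ n := hn
  have hmem' : ∀ p ∈ X.primesLE, c * p ∈ Set.Icc c n := fun p hp ↦ by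
    simpa only [prod_singleton] using hmem {p} (singleton_subset_iff.2 hp) hk
  have hndvd : ¬ c * q ∣ c * ∏ p ∈ B, p := by
    rw [Nat.mul_dvd_mul_iff_left hc, (hprime q hq).prime.dvd_finsetProd_iff]
    rintro ⟨p, hp, hqp⟩
    exact hqB ((Nat.prime_dvd_prime_iff_eq (hprime q hq) (hprime p (hB hp))).1 hqp ▸ hp)
  rw [← hf _ (hmem' q hq) _ (hmem B hB hBk), Pi.le_def] at hndvd
  push Not at hndvd
  obtain ⟨j, hj⟩ := hndvd
  refine ⟨j, fun p hp ↦ lt_of_le_of_lt ?_ hj⟩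
  exact (hf _ (hmem' p (hB hp)) _ (hmem B hB hBk)).2
    (Nat.mul_dvd_mul_left c (dvd_prod_of_mem _ hp)) j

lemma DivEmbeds.sq_sub_lt {c n X m d : ℕ} (h : DivEmbeds (Set.Icc c n) d) (hc : 0 < c)
    (hm : 2 ≤ m) (hX : m ^ 2 ≤ X.primeCounting) (hn : c * X ^ (2 * m - 2) ≤ n) :
    m ^ 2 - m < d := by
  obtain ⟨L, hL⟩ := h.exists_isSuitable_primesLE hc (by omega) hn
  simpa only [Fintype.card_fin] using
    hL.lt_card (by omega) (by rwa [Nat.primesLE_card_eq_primeCounting])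

/-- The factor `2` by which `⌊n ^ α⌋ + 1` may exceed `n ^ α` is absorbed by the two missing factors
`⌊(log n) ^ 2⌋`. -/
lemma floor_rpow_add_one_mul_floor_log_sq_pow_le {α : ℝ} {n m : ℕ} (hα : 0 ≤ α)
    (hl : 2 ≤ Real.log n) (hm : 0 < m)
    (hmn : m * (4 * Real.log (Real.log n)) ≤ (1 - α) * Real.log n) :
    (⌊(n : ℝ) ^ α⌋₊ + 1) * ⌊Real.log n ^ 2⌋₊ ^ (2 * m - 2) ≤ n := by
  set l := Real.log n
  have hn0 : (0 : ℝ) < n := Nat.cast_pos.2 (Nat.pos_of_ne_zero fun h ↦ by norm_num [l, h] at hl)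
  have hn1 : (1 : ℝ) ≤ n := mod_cast hn0
  have hl1 : 1 ≤ l := by linarith
  have hfloor : (⌊(n : ℝ) ^ α⌋₊ + 1 : ℝ) ≤ n ^ α * l := by
    have hle : (⌊(n : ℝ) ^ α⌋₊ : ℝ) ≤ n ^ α := Nat.floor_le (by positivity)
    nlinarith [Real.one_le_rpow hn1 hα]
  have hsq : (⌊l ^ 2⌋₊ : ℝ) ≤ l ^ 2 := Nat.floor_le (by positivity)
  have hpow : l ^ (4 * m) ≤ (n : ℝ) ^ (1 - α) := by
    rw [← Real.rpow_natCast, Real.rpow_def_of_pos (by linarith), Real.rpow_def_of_pos hn0,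
      Real.exp_le_exp]
    push_cast
    linarith
  have : ((⌊(n : ℝ) ^ α⌋₊ + 1 : ℝ)) * (⌊l ^ 2⌋₊ : ℝ) ^ (2 * m - 2) ≤ n := by
    calc _ ≤ n ^ α * l * (l ^ 2) ^ (2 * m - 2) := by gcongr
      _ = n ^ α * l ^ (1 + 2 * (2 * m - 2)) := by rw [← pow_mul, pow_add]; ring
      _ ≤ n ^ α * l ^ (4 * m) := by
          gcongr
          omega
      _ ≤ n ^ α * n ^ (1 - α) := by gcongr
      _ = n := by rw [← Real.rpow_add hn0, add_sub_cancel, Real.rpow_one]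
  exact_mod_cast this

lemma Icc_floor_add_one_subset (x : ℝ) (n : ℕ) :
    Set.Icc (⌊x⌋₊ + 1) n ⊆ {m : ℕ | x < (m : ℝ) ∧ m ≤ n} :=
  fun _ hm ↦ ⟨Nat.lt_of_floor_lt hm.1, hm.2⟩

lemma eventually_div_log_sq_le_primeCounting :
    ∀ᶠ x : ℝ in atTop, x / Real.log x ^ 2 ≤ ⌊x⌋₊.primeCounting := by
  filter_upwards [Real.isLittleO_log_id_atTop.bound (show (0 : ℝ) < 1 / 16 by norm_num),
    Real.tendsto_log_atTop.eventually_ge_atTop 4, eventually_ge_atTop 16] with x hlog hlog4 hx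
  rw [Real.norm_of_nonneg (by linarith), id, Real.norm_of_nonneg (by linarith)] at hlog
  have hlog2 : Real.log (x + 2) ≤ 2 * Real.log x := by
    rw [← Nat.cast_two (R := ℝ), ← Real.log_pow]
    exact Real.log_le_log (by positivity) (by push_cast; nlinarith)
  have hmain : x / Real.log x ≤ (x - 1) * Real.log 2 - Real.log (x + 2) := by
    calc x / Real.log x ≤ x / 4 := by gcongr
      _ ≤ (x - 1) * Real.log 2 - Real.log (x + 2) := by nlinarith [Real.log_two_gt_d9]
  calc x / Real.log x ^ 2 = x / Real.log x / Real.log x := by rw [sq, div_div]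
    _ ≤ ((x - 1) * Real.log 2 - Real.log (x + 2)) / Real.log x := by gcongr
    _ ≤ _ := Chebyshev.pi_ge' (by linarith)

lemma eventually_mul_sq_le_floor_sq_sub_floor {β c : ℝ} (hβ : 0 ≤ β) (hc : c < β ^ 2) :
    ∀ᶠ z : ℝ in atTop, c * z ^ 2 ≤ (⌊β * z⌋₊ : ℝ) ^ 2 - ⌊β * z⌋₊ := by
  have hfloor : Tendsto (fun z : ℝ ↦ (⌊β * z⌋₊ : ℝ) / z) atTop (𝓝 β) :=
    tendsto_nat_floor_mul_div_atTop hβ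
  have hlim := (hfloor.pow 2).sub (hfloor.mul tendsto_inv_atTop_zero)
  simp only [mul_zero, sub_zero] at hlim
  filter_upwards [hlim.eventually_const_le hc, eventually_gt_atTop 0] with z hz hz0
  calc c * z ^ 2 ≤ (((⌊β * z⌋₊ : ℝ) / z) ^ 2 - ⌊β * z⌋₊ / z * z⁻¹) * z ^ 2 := by gcongr
    _ = _ := by field_simp

lemma sq_sub_lt_divDim {α : ℝ} {n m : ℕ} {S : Set ℕ} (hα : 0 ≤ α) (hl : 2 ≤ Real.log n)
    (hm : 2 ≤ m) (hmn : m * (4 * Real.log (Real.log n)) ≤ (1 - α) * Real.log n)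
    (hmπ : m ^ 2 ≤ ⌊Real.log n ^ 2⌋₊.primeCounting) (hS : S.Finite)
    (hsub : {m : ℕ | (n : ℝ) ^ α < m ∧ m ≤ n} ⊆ S) : m ^ 2 - m < divDim S :=
  ((divEmbeds_divDim hS).mono ((Icc_floor_add_one_subset _ n).trans hsub)).sq_sub_lt
    (Nat.succ_pos _) hm hmπ
    (floor_rpow_add_one_mul_floor_log_sq_pow_le hα hl (by omega) hmn)

lemma eventually_div_two_mul_log_sq_le_primeCounting_sq :
    ∀ᶠ l : ℝ in atTop, (l / (2 * Real.log l)) ^ 2 ≤ ⌊l ^ 2⌋₊.primeCounting := by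
  filter_upwards [(tendsto_pow_atTop two_ne_zero).eventually
    eventually_div_log_sq_le_primeCounting] with l hl
  rwa [Real.log_pow, Nat.cast_two, ← div_pow] at hl

lemma tendsto_div_log_atTop : Tendsto (fun l : ℝ ↦ l / Real.log l) atTop atTop := by
  refine ((Real.tendsto_exp_div_pow_atTop 1).comp Real.tendsto_log_atTop).congr' ?_
  filter_upwards [eventually_gt_atTop 0] with l hl
  simp only [Function.comp_apply, Real.exp_log hl, pow_one]

lemma eventually_le_divDim {α c : ℝ} (hα0 : 0 ≤ α) (hα1 : α < 1) (hc : c < (1 - α) ^ 2 / 16) :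
    ∀ᶠ n : ℕ in atTop, ∀ S : Set ℕ, S.Finite → {m : ℕ | (n : ℝ) ^ α < m ∧ m ≤ n} ⊆ S →
      c * Real.log n ^ 2 / Real.log (Real.log n) ^ 2 ≤ divDim S := by
  set β := (1 - α) / 4 with hβ
  have hβ0 : 0 < β := by positivity
  have hcβ : c < β ^ 2 := by rw [hβ]; linarith
  have hfloor_atTop : Tendsto (fun l ↦ ⌊β * (l / Real.log l)⌋₊) atTop atTop :=
    tendsto_nat_floor_atTop.comp (tendsto_div_log_atTop.const_mul_atTop hβ0)
  filter_upwards [tendsto_log_natCast_atTop.eventually_ge_atTop 2,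
    tendsto_log_natCast_atTop.eventually (hfloor_atTop.eventually_ge_atTop 2),
    tendsto_log_natCast_atTop.eventually (tendsto_div_log_atTop.eventually
      (eventually_mul_sq_le_floor_sq_sub_floor hβ0.le hcβ)),
    tendsto_log_natCast_atTop.eventually eventually_div_two_mul_log_sq_le_primeCounting_sq]
    with n hl hm hfloor hπ S hS hsub
  set l := Real.log n
  set y := Real.log l
  set m := ⌊β * (l / y)⌋₊
  have hy : 0 < y := Real.log_pos (by linarith)
  have hmz : (m : ℝ) ≤ β * (l / y) := Nat.floor_le (by positivity)
  have hmn : m * (4 * y) ≤ (1 - α) * l := by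
    calc m * (4 * y) ≤ β * (l / y) * (4 * y) := by gcongr
      _ = (1 - α) * l := by rw [hβ]; field_simp
  have hmπ : (m : ℝ) ^ 2 ≤ ⌊l ^ 2⌋₊.primeCounting := by
    calc (m : ℝ) ^ 2 ≤ (1 / 2 * (l / y)) ^ 2 := by
          gcongr
          exact hmz.trans (by gcongr; linarith)
      _ = (l / (2 * y)) ^ 2 := by field_simp
      _ ≤ _ := hπ
  have hlt := sq_sub_lt_divDim hα0 hl hm hmn (mod_cast hmπ) hS hsub
  calc c * l ^ 2 / y ^ 2 = c * (l / y) ^ 2 := by rw [div_pow, mul_div_assoc]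
    _ ≤ (m : ℝ) ^ 2 - m := hfloor
    _ ≤ divDim S := by
        rw [sub_le_iff_le_add]
        exact_mod_cast (show m ^ 2 ≤ divDim S + m by omega)

theorem divDim_Ioc_rpow_bounds_general {α c C : ℝ} (hα0 : 0 ≤ α) (hα1 : α < 1)
    (hc : c < (1 - α) ^ 2 / 16) (hC : 2 < C) :
    ∃ N : ℕ, ∀ n : ℕ, N ≤ n → ∀ S : Set ℕ,
      {m : ℕ | (n : ℝ) ^ α < (m : ℝ) ∧ m ≤ n} ⊆ S → S ⊆ Set.Icc 1 n →
      c * Real.log n ^ 2 / Real.log (Real.log n) ^ 2 ≤ (divDim S : ℝ) ∧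
        (divDim S : ℝ) ≤ C * Real.log n ^ 2 / Real.log (Real.log n) := by
  obtain ⟨N, hN⟩ := eventually_atTop.1
    ((eventually_le_divDim hα0 hα1 hc).and (eventually_divDim_le hC))
  exact ⟨N, fun n hn S hsub hS ↦
    ⟨(hN n hn).1 S ((Set.finite_Icc 1 n).subset hS) hsub, (hN n hn).2 S hS⟩⟩

/-- For fixed `α ∈ (0,1)`, for every `ε > 0` and all large `n`,
`((1-α)²/16 - ε) (log n)²/(log log n)² ≤ dim(D_{(n^α, n]}) ≤ (4 + ε) (log n)²/log log n`. -/
theorem divDim_Ioc_rpow_bounds (α : ℝ) (hα0 : 0 < α) (hα1 : α < 1) :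
    ∀ ε : ℝ, 0 < ε → ∃ N : ℕ, ∀ n : ℕ, N ≤ n →
      ((1 - α) ^ 2 / 16 - ε) * (Real.log n) ^ 2 / (Real.log (Real.log n)) ^ 2
          ≤ (divDim {m : ℕ | (n : ℝ) ^ α < (m : ℝ) ∧ m ≤ n} : ℝ) ∧
        (divDim {m : ℕ | (n : ℝ) ^ α < (m : ℝ) ∧ m ≤ n} : ℝ)
          ≤ (4 + ε) * (Real.log n) ^ 2 / Real.log (Real.log n) := by
  intro ε hε
  obtain ⟨N, hN⟩ := divDim_Ioc_rpow_bounds_general hα0.le hα1 (sub_lt_self _ hε)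
    (show 2 < 4 + ε by linarith)
  exact ⟨N, fun n hn ↦ hN n hn _ subset_rfl fun m hm ↦
    ⟨Nat.cast_pos.1 ((Real.rpow_nonneg n.cast_nonneg α).trans_lt hm.1), hm.2⟩⟩
end

section
/- Fix positive integers a and b. For every ε > 0 there exists N such that for all n ≥ N, the Dushnik–Miller dimension of the divisibility poset on the arithmetic progression a[n] + b = {ak + b : k ∈ {1,…,n}} satisfies (1/16 − ε)·(log n)²/(log log n)² ≤ dim(D_{a[n]+b}) ≤ (4 + ε)·(log n)²/(log log n). -/
/-!
For the upper bound, `x ∣ y` has to be tested on the valuations at every prime. A prime below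
`log N` gets a coordinate of its own. The larger ones are split into layers `[m, m ^ 2)`; a number
up to `N` has few prime factors in a layer, so by a probabilistic argument a few permutations of
the layer suffice for every prime to come before those few in one of them. Comparing valuations
lexicographically along such a permutation then detects the failure of divisibility at that prime.

For the lower bound, take multiples `p * q ≡ 1 [MOD a]` with `p` a prime up to about `(log n) ^ 2`
and `q ≤ a`. In dimension `d`, if there are more than `d + s` of them, one is dominated in every
coordinate by some member of a set of `s + d / s` others. With `s` of order `√d` and `d` too small,
`b` times the product of that set is still at most `a * n + b`, so the first multiple divides it,
which is impossible.
-/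

open Finset Filter Asymptotics

variable {ι α : Type*} {S : Set ℕ}

/-- `f` is an order embedding of the divisibility poset on `S` into `ι → ℝ`; its values outside
`S` are irrelevant. -/
def IsDivEmbedding (S : Set ℕ) (f : ℕ → ι → ℝ) : Prop :=
  ∀ a ∈ S, ∀ b ∈ S, (f a ≤ f b ↔ a ∣ b)

theorem IsDivEmbedding.comp_equiv {κ : Type*} {f : ℕ → ι → ℝ} (hf : IsDivEmbedding S f)
    (e : κ ≃ ι) : IsDivEmbedding S fun x => f x ∘ e := fun a ha b hb =>
  (e.forall_congr_left.trans (by simp [Pi.le_def])).trans (hf a ha b hb)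

theorem IsDivEmbedding.divDim_le_card [Fintype ι] {f : ℕ → ι → ℝ} (hf : IsDivEmbedding S f) :
    divDim S ≤ Fintype.card ι :=
  Nat.sInf_le ⟨_, hf.comp_equiv (Fintype.equivFin ι).symm⟩

theorem exists_isDivEmbedding_fin_divDim (hS : S.Finite) :
    ∃ f : ℕ → Fin (divDim S) → ℝ, IsDivEmbedding S f := by
  classical
  have := hS.fintype
  let g : ℕ → S → ℝ := fun x s => if s.1 ∣ x then 1 else 0
  have hg : IsDivEmbedding S g := by
    refine fun a ha b _ => ⟨fun h => ?_, fun h s => ?_⟩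
    · by_contra hab
      simpa [g, hab, not_le.2 one_pos] using h ⟨a, ha⟩
    · by_cases hs : s.1 ∣ a
      · simp [g, hs, hs.trans h]
      · simp only [g, hs, if_false]
        split_ifs <;> norm_num
  have hne : {d : ℕ | ∃ f : ℕ → Fin d → ℝ, IsDivEmbedding S f}.Nonempty :=
    ⟨_, _, hg.comp_equiv (Fintype.equivFin S).symm⟩
  exact Nat.sInf_mem hne

/-! ### Lower bound -/

section Dushnik

variable {β : Type*} [Fintype ι] [LinearOrder β] {M : Finset α} {s : ℕ}

/-- Let `top t` be a point of `M` maximizing `g t`. Among `s + 1` points of `M` which are not of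
this form, some `i` is the best of the `s + 1` for only few `t`; for those `t` it is dominated by
`top t`, for all others by one of the remaining `s` points. -/
theorem exists_mem_forall_exists_le (g : ι → α → β) (hM : Fintype.card ι + s < #M) :
    ∃ i ∈ M, ∃ U ⊆ M, i ∉ U ∧ s ≤ #U ∧ #U ≤ s + Fintype.card ι / (s + 1) ∧
      ∀ t, ∃ j ∈ U, g t i ≤ g t j := by
  classical
  have hM₀ : M.Nonempty := card_pos.1 (by omega)
  choose top htopM htop using fun t => exists_max_image M (g t) hM₀
  obtain ⟨A, hA, hAcard⟩ : ∃ A ⊆ M \ univ.image top, #A = s + 1 := by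
    refine exists_subset_card_eq ?_
    have hsdiff := le_card_sdiff (univ.image top) M
    have himage : #(univ.image top) ≤ Fintype.card ι := card_image_le
    omega
  have hAM : A ⊆ M := hA.trans sdiff_subset
  choose best hbestA hbest using fun t => exists_max_image A (g t) (card_pos.1 (by omega))
  obtain ⟨i, hiA, hi⟩ : ∃ i ∈ A, #{t | best t = i} < Fintype.card ι / (s + 1) + 1 := by
    refine exists_card_fiber_lt_of_card_lt_mul ?_
    rw [hAcard, card_univ]
    exact Nat.lt_mul_div_succ _ s.succ_pos
  have herase : #(A.erase i) = s := by rw [card_erase_of_mem hiA, hAcard, Nat.add_sub_cancel]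
  refine ⟨i, hAM hiA, A.erase i ∪ ({t | best t = i} : Finset ι).image top,
    union_subset ((erase_subset _ _).trans hAM) (image_subset_iff.2 fun t _ => htopM t),
    ?_, ?_, ?_, fun t => ?_⟩
  · have hitop : i ∉ univ.image top := (mem_sdiff.1 (hA hiA)).2
    simp_all
  · exact herase.ge.trans (card_le_card subset_union_left)
  · have hunion := card_union_le (A.erase i) (({t | best t = i} : Finset ι).image top)
    have himage : #(({t | best t = i} : Finset ι).image top) ≤ _ := card_image_le
    omega
  · by_cases ht : best t = i
    · exact ⟨top t, mem_union_right _ (mem_image_of_mem _ (by simpa)), htop t i (hAM hiA)⟩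
    · exact ⟨best t, mem_union_left _ (mem_erase.2 ⟨ht, hbestA t⟩), hbest t i hiA⟩

theorem IsDivEmbedding.exists_dvd_prod {f : ℕ → ι → ℝ} (hf : IsDivEmbedding S f) {b : ℕ}
    (hb : b ≠ 0) (w : α → ℕ) (hs : s ≠ 0) (hM : Fintype.card ι + s < #M)
    (hw : ∀ U ⊆ M, U.Nonempty → #U ≤ s + Fintype.card ι / (s + 1) → b * ∏ j ∈ U, w j ∈ S) :
    ∃ i ∈ M, ∃ U ⊆ M, i ∉ U ∧ w i ∣ ∏ j ∈ U, w j := by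
  obtain ⟨i, hi, U, hU, hiU, hsU, hUcard, hle⟩ :=
    exists_mem_forall_exists_le (fun t i => f (b * w i) t) hM
  have hsingle : ∀ j ∈ M, b * w j ∈ S := fun j hj => by
    simpa using hw {j} (by simpa) (singleton_nonempty j) (by simp; omega)
  have hprod : b * ∏ j ∈ U, w j ∈ S := hw U hU (card_pos.1 (by omega)) hUcard
  refine ⟨i, hi, U, hU, hiU, Nat.dvd_of_mul_dvd_mul_left (Nat.pos_of_ne_zero hb) ?_⟩
  refine (hf _ (hsingle i hi) _ hprod).1 fun t => ?_
  obtain ⟨j, hj, hij⟩ := hle t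
  exact hij.trans
    ((hf _ (hsingle j (hU hj)) _ hprod).2 (Nat.mul_dvd_mul_left b (dvd_prod_of_mem w hj)) t)

end Dushnik

/-- The arithmetic progression `a[n] + b`. -/
def arithProg (a b n : ℕ) : Set ℕ :=
  {m | ∃ k, 1 ≤ k ∧ k ≤ n ∧ m = a * k + b}

variable {a b n : ℕ}

theorem arithProg_subset_Icc (hb : b ≠ 0) : arithProg a b n ⊆ Set.Icc 1 (a * n + b) := by
  rintro _ ⟨k, -, hk, rfl⟩
  exact ⟨by omega, by gcongr⟩

theorem mul_mem_arithProg (ha : a ≠ 0) (hb : b ≠ 0) {w : ℕ} (hw : w ≡ 1 [MOD a]) (hw₁ : 1 < w)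
    (hle : b * w ≤ a * n + b) : b * w ∈ arithProg a b n := by
  obtain ⟨c, hc⟩ := (Nat.modEq_iff_dvd' hw₁.le).1 hw.symm
  obtain rfl : w = a * c + 1 := by omega
  have hc₀ : c ≠ 0 := by rintro rfl; simp at hw₁
  refine ⟨b * c, Nat.pos_of_ne_zero (mul_ne_zero hb hc₀), ?_, by ring⟩
  refine Nat.le_of_mul_le_mul_left ?_ (Nat.pos_of_ne_zero ha)
  linarith

theorem exists_le_mul_modEq_one (ha : a ≠ 0) {p : ℕ} (hp : p.Coprime a) :
    ∃ q, 0 < q ∧ q ≤ a ∧ p * q ≡ 1 [MOD a] := by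
  have : NeZero a := ⟨ha⟩
  -- Shifting by one selects the representative of `p⁻¹` in `[1, a]`, also when `a = 1`.
  refine ⟨((p : ZMod a)⁻¹ - 1).val + 1, Nat.succ_pos _, ZMod.val_lt _, ?_⟩
  rw [← ZMod.natCast_eq_natCast_iff]
  simp [ZMod.coe_mul_inv_eq_one p hp]

theorem modEq_one_prod {U : Finset α} {w : α → ℕ} (hw : ∀ j ∈ U, w j ≡ 1 [MOD a]) :
    ∏ j ∈ U, w j ≡ 1 [MOD a] :=
  prod_induction w (· ≡ 1 [MOD a]) (fun _ _ hx hy => hx.mul hy) (Nat.ModEq.refl 1) hw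

theorem mem_of_prime_dvd_prod_mul {U : Finset ℕ} {p : ℕ} {q : ℕ → ℕ} (hp : p.Prime)
    (hU : ∀ r ∈ U, r.Prime ∧ 0 < q r ∧ q r < p) (hdvd : p ∣ ∏ r ∈ U, r * q r) : p ∈ U := by
  obtain ⟨r, hr, hpr⟩ := (Prime.dvd_finsetProd_iff hp.prime _).1 hdvd
  obtain ⟨hr_prime, hq₀, hq_lt⟩ := hU r hr
  rcases hp.dvd_mul.1 hpr with h | h
  · exact (Nat.prime_dvd_prime_iff_eq hp hr_prime).1 h ▸ hr
  · exact absurd (Nat.le_of_dvd hq₀ h) (not_le.2 hq_lt)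

theorem le_card_primesLE_sdiff_Icc (a T : ℕ) :
    Nat.primeCounting T - a ≤ #(Nat.primesLE T \ Icc 1 a) := by
  simpa [Nat.primesLE_card_eq_primeCounting] using le_card_sdiff (Icc 1 a) (Nat.primesLE T)

/-- Each prime `p` with `a < p ≤ T` has a multiple `p * q ≡ 1 [MOD a]` with `q ≤ a`. Products of
such multiples, times `b`, stay in the progression, and since `q ≤ a < p` a prime divides a product
only if it is one of the primes used to form it. -/
theorem lt_mul_pow_of_divDim_lt_primeCounting (ha : a ≠ 0) (hb : b ≠ 0) {s T : ℕ} (hs : s ≠ 0)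
    (hT : divDim (arithProg a b n) + s + a < Nat.primeCounting T) :
    a * n + b < b * (a * T) ^ (s + divDim (arithProg a b n) / (s + 1)) := by
  by_contra! hle
  obtain ⟨f, hf⟩ := exists_isDivEmbedding_fin_divDim
    ((Set.finite_Icc 1 (a * n + b)).subset (arithProg_subset_Icc hb))
  set d := divDim (arithProg a b n)
  let M := Nat.primesLE T \ Icc 1 a
  have hM : ∀ p ∈ M, p.Prime ∧ p ≤ T ∧ a < p := fun p hp => by
    obtain ⟨⟨hpT, hp_prime⟩, hpa⟩ : (p ≤ T ∧ p.Prime) ∧ (0 < p → a < p) := by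
      simpa [M, Nat.mem_primesLE, Nat.succ_le_iff] using hp
    exact ⟨hp_prime, hpT, hpa hp_prime.pos⟩
  have hMcard : Fintype.card (Fin d) + s < #M := by
    have hπ : Nat.primeCounting T - a ≤ #M := le_card_primesLE_sdiff_Icc a T
    rw [Fintype.card_fin]
    omega
  choose! q hq₀ hqa hq using fun p (hp : p ∈ M) => exists_le_mul_modEq_one ha
    (Nat.coprime_of_lt_prime ha (hM p hp).2.2 (hM p hp).1)
  have hw_gt : ∀ p ∈ M, 1 < p * q p := fun p hp =>
    (hM p hp).1.one_lt.trans_le (Nat.le_mul_of_pos_right p (hq₀ p hp))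
  have hw_le : ∀ p ∈ M, p * q p ≤ a * T := fun p hp => by
    rw [mul_comm]
    exact Nat.mul_le_mul (hqa p hp) (hM p hp).2.1
  have hprod_mem : ∀ U ⊆ M, U.Nonempty → #U ≤ s + Fintype.card (Fin d) / (s + 1) →
      b * ∏ p ∈ U, p * q p ∈ arithProg a b n := by
    rintro U hU ⟨p, hp⟩ hUcard
    rw [Fintype.card_fin] at hUcard
    refine mul_mem_arithProg ha hb (modEq_one_prod fun r hr => hq r (hU hr)) ?_ (le_trans ?_ hle)
    · refine (hw_gt p (hU hp)).trans_le (Nat.le_of_dvd (prod_pos fun r hr => ?_)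
        (dvd_prod_of_mem _ hp))
      exact zero_lt_one.trans (hw_gt r (hU hr))
    · gcongr
      refine (prod_le_pow_card _ _ _ fun r hr => hw_le r (hU hr)).trans
        (Nat.pow_le_pow_right ?_ hUcard)
      exact (zero_lt_one.trans (hw_gt p (hU hp))).trans_le (hw_le p (hU hp))
  obtain ⟨p, hp, U, hU, hpU, hdvd⟩ := hf.exists_dvd_prod hb (fun p => p * q p) hs hMcard hprod_mem
  refine hpU (mem_of_prime_dvd_prod_mul (hM p hp).1 (fun r hr => ⟨(hM r (hU hr)).1,
    hq₀ r (hU hr), (hqa r (hU hr)).trans_lt (hM p hp).2.2⟩) ((dvd_mul_right _ _).trans hdvd))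

theorem eventually_div_two_mul_log_le_primeCounting :
    ∀ᶠ x : ℝ in atTop, x / (2 * Real.log x) ≤ Nat.primeCounting ⌊x⌋₊ := by
  have hlog := Real.isLittleO_log_id_atTop.bound (show (0 : ℝ) < 1 / 20 by norm_num)
  filter_upwards [hlog, eventually_ge_atTop 100] with x hlogx hx
  have hlog₀ : 0 < Real.log x := Real.log_pos (by linarith)
  rw [Real.norm_of_nonneg hlog₀.le, id, Real.norm_of_nonneg (by linarith)] at hlogx
  refine le_trans ?_ (Chebyshev.pi_ge' (by linarith))
  have hlog_add_two : Real.log (x + 2) ≤ 2 * Real.log x := by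
    rw [← Real.log_rpow (by linarith)]
    exact Real.log_le_log (by linarith) (by norm_num; nlinarith)
  rw [← div_div]
  gcongr
  nlinarith [Real.log_two_gt_d9]

theorem eventually_sq_div_log_add_le_primeCounting (A : ℝ) :
    ∀ᶠ x : ℝ in atTop,
      (x / Real.log x) ^ 2 + x / Real.log x + A ≤ Nat.primeCounting ⌊x ^ 2⌋₊ := by
  filter_upwards [(tendsto_pow_atTop two_ne_zero).eventually
    eventually_div_two_mul_log_le_primeCounting, Real.tendsto_log_atTop.eventually_ge_atTop 12,
    eventually_ge_atTop (12 * |A|)] with x hπ hlog hA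
  have hlog₀ : 0 < Real.log x := by linarith
  have hlog_le : Real.log x ≤ x := Real.log_le_self (by linarith [abs_nonneg A])
  refine le_trans ?_ hπ
  have hA_le : 12 * A * Real.log x ≤ x ^ 2 := by nlinarith [le_abs_self A]
  have hfirst : 12 * (x / Real.log x) ^ 2 ≤ x ^ 2 / Real.log x := by
    rw [div_pow, sq (Real.log x), ← div_div, ← mul_div_assoc]
    gcongr
    rw [← mul_div_assoc, div_le_iff₀ hlog₀, mul_comm]
    gcongr
  have hsecond : 12 * (x / Real.log x) ≤ x ^ 2 / Real.log x := by
    rw [← mul_div_assoc]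
    gcongr
    nlinarith
  have hthird : 12 * A ≤ x ^ 2 / Real.log x := (le_div_iff₀ hlog₀).2 hA_le
  have hright : x ^ 2 / (2 * Real.log (x ^ 2)) = x ^ 2 / Real.log x / 4 := by
    rw [Real.log_pow]
    push_cast
    field_simp
    ring
  linarith

theorem eventually_mul_log_add_le {c : ℝ} (hc : c < 1 / 4) (A B : ℝ) :
    ∀ᶠ x : ℝ in atTop,
      (2 * c * (x / Real.log x) + 1) * (A + 2 * Real.log x) + B ≤ x := by
  have hdiv : (fun x : ℝ => x / Real.log x) =o[atTop] (fun x => x) := by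
    simpa [div_eq_mul_inv] using (isBigO_refl (fun x : ℝ => x) atTop).mul_isLittleO
      ((isLittleO_one_iff ℝ).2 Real.tendsto_log_atTop.inv_tendsto_atTop)
  have herror : (fun x : ℝ => 2 * c * A * (x / Real.log x) + 2 * Real.log x + (A + B))
      =o[atTop] (fun x => x) :=
    ((hdiv.const_mul_left _).add (Real.isLittleO_log_id_atTop.const_mul_left 2)).add
      (isLittleO_const_id_atTop (A + B))
  filter_upwards [herror.bound (show 0 < 1 - 4 * c by linarith), eventually_gt_atTop 1]
    with x hx hx₁
  have hlog : 0 < Real.log x := Real.log_pos hx₁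
  rw [Real.norm_of_nonneg (show 0 ≤ x by linarith)] at hx
  calc (2 * c * (x / Real.log x) + 1) * (A + 2 * Real.log x) + B
      = 4 * c * x + (2 * c * A * (x / Real.log x) + 2 * Real.log x + (A + B)) := by
        field_simp
        ring
    _ ≤ 4 * c * x + (1 - 4 * c) * x := by gcongr; exact (le_abs_self _).trans hx
    _ = x := by ring

theorem mul_pow_le_of_log_le {T k : ℕ} (ha : a ≠ 0) (hb : b ≠ 0) (hn : n ≠ 0) (hT : T ≠ 0)
    (h : k * (Real.log a + Real.log T) + Real.log b ≤ Real.log n) : b * (a * T) ^ k ≤ n := by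
  have ha' : (a : ℝ) ≠ 0 := mod_cast ha
  have hb' : (b : ℝ) ≠ 0 := mod_cast hb
  have hT' : (T : ℝ) ≠ 0 := mod_cast hT
  have : Real.log ((b * (a * T) ^ k : ℕ) : ℝ) ≤ Real.log n := by
    push_cast
    rw [Real.log_mul hb' (by positivity), Real.log_pow, Real.log_mul ha' hT']
    linarith
  exact_mod_cast (Real.log_le_log_iff (by positivity) (by positivity)).1 this

theorem sq_le_divDim_arithProg {X : ℝ} (hX : 0 < X) {T : ℕ} (ha : a ≠ 0) (hb : b ≠ 0)
    (hn : n ≠ 0) (hT : T ≠ 0) (hπ : X ^ 2 + (X + 1) + a ≤ Nat.primeCounting T)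
    (hlog : (2 * X + 1) * (Real.log a + Real.log T) + Real.log b ≤ Real.log n) :
    X ^ 2 ≤ divDim (arithProg a b n) := by
  by_contra! hd
  set d := divDim (arithProg a b n)
  -- `s ≈ X` balances the two summands of the exponent `s + d / (s + 1)`.
  set s := ⌈X⌉₊
  have hs : X ≤ s := Nat.le_ceil _
  have hs' : (s : ℝ) < X + 1 := Nat.ceil_lt_add_one hX.le
  have hexp : ((s + d / (s + 1) : ℕ) : ℝ) ≤ 2 * X + 1 := by
    have hdiv : ((d / (s + 1) : ℕ) : ℝ) ≤ X := by
      refine Nat.cast_div_le.trans ((div_le_iff₀ (by positivity)).2 ?_)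
      push_cast
      nlinarith
    push_cast
    linarith
  have hcard : d + s + a < Nat.primeCounting T := by
    rify
    linarith
  refine (lt_mul_pow_of_divDim_lt_primeCounting ha hb (Nat.ceil_pos.2 hX).ne' hcard).not_ge ?_
  refine (mul_pow_le_of_log_le ha hb hn hT (le_trans ?_ hlog)).trans ?_
  · gcongr
  · exact (Nat.le_mul_of_pos_left n (Nat.pos_of_ne_zero ha)).trans (Nat.le_add_right _ _)

theorem eventually_le_divDim_arithProg (ha : a ≠ 0) (hb : b ≠ 0) {C : ℝ} (hC : C < 1 / 16) :
    ∀ᶠ n : ℕ in atTop,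
      C * Real.log n ^ 2 / Real.log (Real.log n) ^ 2 ≤ divDim (arithProg a b n) := by
  obtain ⟨c, hCc, hc⟩ : ∃ c, √C < c ∧ c < 1 / 4 :=
    exists_between ((Real.sqrt_lt' (by norm_num)).2 (by linarith))
  have hc₀ : 0 < c := (Real.sqrt_nonneg C).trans_lt hCc
  have hlog : Tendsto (fun n : ℕ => Real.log n) atTop atTop :=
    Real.tendsto_log_atTop.comp tendsto_natCast_atTop_atTop
  filter_upwards [hlog.eventually (eventually_sq_div_log_add_le_primeCounting (1 + a)),
    hlog.eventually (eventually_mul_log_add_le hc (Real.log a) (Real.log b)),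
    hlog.eventually_gt_atTop 1, eventually_ne_atTop 0] with n hπ hle hL hn
  set L := Real.log n
  have hl : 0 < Real.log L := Real.log_pos hL
  have hX : 0 < L / Real.log L := by positivity
  have hT : 1 ≤ ⌊L ^ 2⌋₊ := Nat.le_floor (by rw [Nat.cast_one]; nlinarith)
  have hlogT : Real.log ⌊L ^ 2⌋₊ ≤ 2 * Real.log L := by
    refine (Real.log_le_log (by exact_mod_cast hT) (Nat.floor_le (by positivity))).trans_eq ?_
    rw [Real.log_pow, Nat.cast_two]
  have hcX : c * (L / Real.log L) ≤ L / Real.log L := mul_le_of_le_one_left hX.le (by linarith)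
  calc C * L ^ 2 / Real.log L ^ 2 = C * (L / Real.log L) ^ 2 := by rw [div_pow, mul_div_assoc]
    _ ≤ c ^ 2 * (L / Real.log L) ^ 2 := by gcongr; exact ((Real.sqrt_lt' hc₀).1 hCc).le
    _ = (c * (L / Real.log L)) ^ 2 := (mul_pow _ _ _).symm
    _ ≤ divDim (arithProg a b n) := by
      refine sq_le_divDim_arithProg (mul_pos hc₀ hX) ha hb hn (by omega) (hπ.trans' ?_)
        (hle.trans' ?_)
      · have : (c * (L / Real.log L)) ^ 2 ≤ (L / Real.log L) ^ 2 := by gcongr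
        linarith
      · rw [← mul_assoc 2]
        gcongr

/-! ### Upper bound -/

section Cover

variable {Ω : Type*} [Fintype Ω] [Nonempty Ω] (R : Ω → α → Prop) [∀ ω, DecidablePred (R ω)]
  {A : Finset α} {δ : ℝ}

theorem exists_card_filter_not_le (hR : ∀ u ∈ A, δ * Fintype.card Ω ≤ #{ω | R ω u}) :
    ∃ ω, (#{u ∈ A | ¬R ω u} : ℝ) ≤ (1 - δ) * #A := by
  have hsum : ∑ ω, (#{u ∈ A | ¬R ω u} : ℝ) ≤ ∑ _ω : Ω, (1 - δ) * #A := by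
    calc ∑ ω, (#{u ∈ A | ¬R ω u} : ℝ) = ∑ u ∈ A, (#{ω | ¬R ω u} : ℝ) := by
          exact_mod_cast sum_card_bipartiteAbove_eq_sum_card_bipartiteBelow fun ω u => ¬R ω u
      _ ≤ ∑ _u ∈ A, (1 - δ) * Fintype.card Ω := by
          refine sum_le_sum fun u hu => ?_
          have hcompl : (#{ω | R ω u} : ℝ) + #{ω | ¬R ω u} = Fintype.card Ω := by
            exact_mod_cast card_filter_add_card_filter_not (s := univ) fun ω => R ω u
          linarith [hR u hu]
      _ = ∑ _ω : Ω, (1 - δ) * #A := by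
          simp only [sum_const, card_univ, nsmul_eq_mul]
          ring
  obtain ⟨ω, -, hω⟩ := exists_le_of_sum_le univ_nonempty hsum
  exact ⟨ω, hω⟩

theorem exists_card_uncovered_le (hδ : δ ≤ 1)
    (hR : ∀ u ∈ A, δ * Fintype.card Ω ≤ #{ω | R ω u}) (t : ℕ) :
    ∃ s : Fin t → Ω, (#{u ∈ A | ∀ i, ¬R (s i) u} : ℝ) ≤ (1 - δ) ^ t * #A := by
  induction t with
  | zero => exact ⟨Fin.elim0, by simp⟩
  | succ t ih =>
    obtain ⟨s, hs⟩ := ih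
    obtain ⟨ω, hω⟩ := exists_card_filter_not_le R (A := {u ∈ A | ∀ i, ¬R (s i) u})
      fun u hu => hR u (mem_filter.1 hu).1
    refine ⟨Fin.cons ω s, ?_⟩
    calc (#{u ∈ A | ∀ i, ¬R ((Fin.cons ω s : Fin (t + 1) → Ω) i) u} : ℝ)
        = #{u ∈ {u ∈ A | ∀ i, ¬R (s i) u} | ¬R ω u} := by
          simp [filter_filter, Fin.forall_fin_succ, and_comm]
      _ ≤ (1 - δ) * ((1 - δ) ^ t * #A) :=
          hω.trans (mul_le_mul_of_nonneg_left hs (sub_nonneg.2 hδ))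
      _ = (1 - δ) ^ (t + 1) * #A := by ring

theorem exists_cover_of_log_card_lt (hδ : δ ≤ 1)
    (hR : ∀ u ∈ A, δ * Fintype.card Ω ≤ #{ω | R ω u}) {t : ℕ} (ht : Real.log #A < t * δ) :
    ∃ s : Fin t → Ω, ∀ u ∈ A, ∃ i, R (s i) u := by
  obtain ⟨s, hs⟩ := exists_card_uncovered_le R hδ hR t
  refine ⟨s, fun u hu => ?_⟩
  by_contra! hus
  have hpos : 1 ≤ #{u ∈ A | ∀ i, ¬R (s i) u} := card_pos.2 ⟨u, mem_filter.2 ⟨hu, hus⟩⟩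
  have hA : (0 : ℝ) < #A := mod_cast card_pos.2 ⟨u, hu⟩
  have hlt : (1 - δ) ^ t * #A < 1 := by
    calc (1 - δ) ^ t * #A ≤ Real.exp (-δ) ^ t * Real.exp (Real.log #A) := by
          rw [Real.exp_log hA]
          gcongr
          exact Real.one_sub_le_exp_neg δ
      _ = Real.exp (Real.log #A - t * δ) := by
          rw [← Real.exp_nat_mul, ← Real.exp_add]
          ring_nf
      _ < 1 := by
          rw [Real.exp_lt_one_iff]
          linarith
  have : (1 : ℝ) ≤ #{u ∈ A | ∀ i, ¬R (s i) u} := mod_cast hpos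
  linarith

end Cover

section Permutations

variable [LinearOrder α]

/-- A family of permutations is suitable of order `r` (Dushnik, Spencer) if every element precedes
any `r` others in one of the permutations; suitable families separate valuations at large
primes. -/
def IsSuitableFamily (r : ℕ) (σ : ι → Equiv.Perm α) : Prop :=
  ∀ p, ∀ U : Finset α, p ∉ U → #U ≤ r → ∃ i, ∀ q ∈ U, σ i p < σ i q

variable [Fintype α]

/-- Some element of `insert p U` comes first, and swapping it with `p` puts `p` first. -/
theorem card_perm_le_mul_card_forall_lt {p : α} {U : Finset α} (hp : p ∉ U) :
    Fintype.card (Equiv.Perm α) ≤ (#U + 1) * #{σ : Equiv.Perm α | ∀ q ∈ U, σ p < σ q} := by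
  let first : α → Finset (Equiv.Perm α) := fun x => {σ | ∀ q ∈ insert p U, σ x ≤ σ q}
  have hcover : univ ⊆ (insert p U).biUnion first := fun σ _ => by
    obtain ⟨x, hx, hmin⟩ := exists_min_image (insert p U) σ (insert_nonempty p U)
    exact mem_biUnion.2 ⟨x, hx, by simpa [first] using hmin⟩
  have hfirst : ∀ x ∈ insert p U,
      #(first x) ≤ #{σ : Equiv.Perm α | ∀ q ∈ U, σ p < σ q} := by
    refine fun x hx => card_le_card_of_injOn (· * Equiv.swap p x) (fun σ hσ => ?_)
      (mul_left_injective _).injOn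
    have hσx : ∀ q ∈ insert p U, σ x ≤ σ q := by simpa [first] using hσ
    simp only [coe_filter, mem_univ, true_and, Set.mem_ofPred_eq, Equiv.Perm.mul_apply,
      Equiv.swap_apply_left]
    intro q hq
    have hqp : q ≠ p := fun h => hp (h ▸ hq)
    rcases eq_or_ne q x with rfl | hqx
    · rw [Equiv.swap_apply_right]
      exact (hσx p (mem_insert_self p U)).lt_of_ne (σ.injective.ne hqp)
    · rw [Equiv.swap_apply_of_ne_of_ne hqp hqx]
      exact (hσx q (mem_insert_of_mem hq)).lt_of_ne (σ.injective.ne hqx.symm)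
  calc Fintype.card (Equiv.Perm α) ≤ #((insert p U).biUnion first) := card_le_card hcover
    _ ≤ #(insert p U) * _ := card_biUnion_le_card_mul _ _ _ hfirst
    _ = _ := by rw [card_insert_of_notMem hp]

theorem exists_isSuitableFamily {r t : ℕ}
    (ht : (r + 1 : ℝ) ^ 2 * Real.log (Fintype.card α) < t) :
    ∃ σ : Fin t → Equiv.Perm α, IsSuitableFamily r σ := by
  -- A set `U ∌ p` of at most `r` elements is encoded as a tuple, padded with copies of `p`.
  let R : Equiv.Perm α → α × (Fin r → α) → Prop := fun σ u => ∀ j, u.2 j ≠ u.1 → σ u.1 < σ (u.2 j)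
  have hR : ∀ u ∈ (univ : Finset (α × (Fin r → α))),
      (1 / (r + 1) : ℝ) * Fintype.card (Equiv.Perm α) ≤ #{σ | R σ u} := by
    rintro ⟨p, g⟩ -
    have hcard : #((univ.image g).erase p) ≤ r :=
      (card_erase_le.trans card_image_le).trans_eq (Fintype.card_fin r)
    have hcount : Fintype.card (Equiv.Perm α) ≤ (r + 1) * #{σ | R σ (p, g)} := by
      refine (card_perm_le_mul_card_forall_lt (notMem_erase p (univ.image g))).trans ?_
      gcongr with σ
      simp only [R, mem_erase, mem_image, mem_univ, true_and]
      exact fun h j hj => h _ ⟨hj, j, rfl⟩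
    rw [div_mul_eq_mul_div, one_mul, div_le_iff₀ (by positivity), mul_comm]
    exact_mod_cast hcount
  have hlog : Real.log #(univ : Finset (α × (Fin r → α))) < t * (1 / (r + 1)) := by
    rw [mul_one_div, lt_div_iff₀ (by positivity), card_univ, Fintype.card_prod, Fintype.card_fun,
      Fintype.card_fin, ← pow_succ', Nat.cast_pow, Real.log_pow]
    push_cast
    linarith
  obtain ⟨σ, hσ⟩ := exists_cover_of_log_card_lt R
    (div_le_one_of_le₀ (by linarith [Nat.cast_nonneg (α := ℝ) r]) (by positivity)) hR hlog
  refine ⟨σ, fun p U hp hU => ?_⟩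
  obtain ⟨e⟩ : Nonempty (U ↪ Fin r) := Function.Embedding.nonempty_of_card_le (by simpa)
  obtain ⟨i, hi⟩ := hσ (p, Function.extend e Subtype.val fun _ => p) (mem_univ _)
  refine ⟨i, fun q hq => ?_⟩
  have hq_eq : Function.extend e Subtype.val (fun _ => p) (e ⟨q, hq⟩) = q :=
    e.injective.extend_apply _ _ _
  simpa only [hq_eq] using hi (e ⟨q, hq⟩)
    (by simpa only [hq_eq] using ne_of_mem_of_not_mem hq hp)

end Permutations

theorem exists_monotone_forall_lex_lt (α : Type*) [LinearOrder α] [Finite α] :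
    ∃ Φ : (α → ℕ) → ℝ, Monotone Φ ∧
      ∀ v w : α → ℕ, ∀ p, (∀ q < p, v q = 0) → v p < w p → Φ v < Φ w := by
  have : Countable (Lex (α → ℕ)) := inferInstanceAs (Countable (α → ℕ))
  obtain ⟨φ⟩ := Order.embedding_from_countable_to_dense (Lex (α → ℕ)) ℝ
  refine ⟨fun v => φ (toLex v), φ.monotone.comp Pi.toLex_monotone, fun v w p hv hvw => ?_⟩
  have hlt : toLex v < toLex (Pi.single p (w p)) :=
    ⟨p, fun q hq => by simp [hv q hq, hq.ne], by simpa using hvw⟩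
  have hle : toLex (Pi.single p (w p)) ≤ toLex w :=
    Pi.toLex_monotone (update_le_iff.2 ⟨le_rfl, by simp⟩)
  exact φ.strictMono (hlt.trans_le hle)

/-- For a permutation from a suitable family, compare the valuations at the primes of `P`
lexicographically in the permuted order. -/
theorem exists_monotone_separating_factorization (P : Finset ℕ) {r t : ℕ}
    (ht : (r + 1 : ℝ) ^ 2 * Real.log #P < t) :
    ∃ F : ℕ → Fin t → ℝ, (∀ a b, b ≠ 0 → a ∣ b → F a ≤ F b) ∧
      ∀ p ∈ P, ∀ a b, #(b.primeFactors ∩ P) ≤ r → b.factorization p < a.factorization p →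
        ¬F a ≤ F b := by
  obtain ⟨σ, hσ⟩ := exists_isSuitableFamily (α := P) (by simpa using ht)
  obtain ⟨Φ, hΦ_mono, hΦ_lt⟩ := exists_monotone_forall_lex_lt P
  let v : ℕ → Fin t → P → ℕ := fun x i k => x.factorization ((σ i).symm k)
  refine ⟨fun x i => Φ (v x i), fun a b hb hab i => hΦ_mono fun k => ?_, ?_⟩
  · exact (Nat.factorization_le_iff_dvd (ne_zero_of_dvd_ne_zero hb hab) hb).2 hab _
  · intro p hp a b hb hlt hle
    let U : Finset P := (b.primeFactors.subtype (· ∈ P)).erase ⟨p, hp⟩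
    have hU : #U ≤ r := by
      refine card_erase_le.trans ?_
      rwa [card_subtype, filter_mem_eq_inter]
    obtain ⟨i, hi⟩ := hσ ⟨p, hp⟩ U (notMem_erase _ _) hU
    refine (hle i).not_gt (hΦ_lt _ _ (σ i ⟨p, hp⟩) (fun k hk => ?_) (by simpa [v] using hlt))
    by_contra hk₀
    refine hk.not_gt ?_
    rw [← (σ i).apply_symm_apply k]
    refine hi _ (mem_erase.2 ⟨?_, ?_⟩)
    · rintro h
      simp [← h] at hk
    · rw [mem_subtype, ← Nat.support_factorization]
      exact Finsupp.mem_support_iff.2 hk₀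

theorem divDim_le_card_add_sum {κ : Type*} [Fintype κ] (hS : 0 ∉ S) (Q : Finset ℕ)
    (P : κ → Finset ℕ) (r t : κ → ℕ)
    (hcover : ∀ x ∈ S, ∀ p ∈ x.primeFactors, p ∈ Q ∨ ∃ j, p ∈ P j)
    (hr : ∀ j, ∀ x ∈ S, #(x.primeFactors ∩ P j) ≤ r j)
    (ht : ∀ j, (r j + 1 : ℝ) ^ 2 * Real.log #(P j) < t j) :
    divDim S ≤ #Q + ∑ j, t j := by
  choose F hF_mono hF_sep using fun j => exists_monotone_separating_factorization (P j) (ht j)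
  let f : ℕ → (Q ⊕ Σ j, Fin (t j)) → ℝ := fun x =>
    Sum.elim (fun p => x.factorization p) fun i => F i.1 x i.2
  have hf : IsDivEmbedding S f := by
    intro a ha b hb
    have ha₀ : a ≠ 0 := ne_of_mem_of_not_mem ha hS
    have hb₀ : b ≠ 0 := ne_of_mem_of_not_mem hb hS
    rw [← Nat.factorization_le_iff_dvd ha₀ hb₀]
    refine ⟨fun hab p => ?_, fun hab => ?_⟩
    · by_contra! hp
      have hpa : p ∈ a.primeFactors := by
        rw [← Nat.support_factorization, Finsupp.mem_support_iff]
        omega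
      rcases hcover a ha p hpa with hpQ | ⟨j, hpj⟩
      · exact hp.not_ge (Nat.cast_le.1 (hab (Sum.inl ⟨p, hpQ⟩)))
      · exact hF_sep j p hpj a b (hr j b hb) hp fun i => hab (Sum.inr ⟨j, i⟩)
    · rintro (p | ⟨j, i⟩)
      · exact Nat.cast_le.2 (hab p)
      · exact hF_mono j a b hb₀ ((Nat.factorization_le_iff_dvd ha₀ hb₀).1 hab) i
  simpa using hf.divDim_le_card

theorem card_primeFactors_inter_Ico_le_log {N m x : ℕ} (hm : 1 < m) (hx : x ≠ 0) (hxN : x ≤ N)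
    (z : ℕ) : #(x.primeFactors ∩ Ico m z) ≤ Nat.log m N := by
  refine Nat.le_log_of_pow_le hm ?_
  calc m ^ #(x.primeFactors ∩ Ico m z) ≤ ∏ p ∈ x.primeFactors ∩ Ico m z, p :=
        pow_card_le_prod _ _ _ fun p hp => (mem_Ico.1 (mem_inter.1 hp).2).1
    _ ≤ x := Nat.le_of_dvd (Nat.pos_of_ne_zero hx)
        ((prod_dvd_prod_of_subset _ _ _ inter_subset_left).trans (Nat.prod_primeFactors_dvd x))
    _ ≤ N := hxN

/-- The number of permutations which `exists_isSuitableFamily` provides for the primes in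
`[m, m ^ 2)`, of which a number up to `N` has at most `Nat.log m N`. -/
noncomputable def layerSize (N m : ℕ) : ℕ :=
  ⌊(Nat.log m N + 1 : ℝ) ^ 2 * (2 * Real.log m)⌋₊ + 1

theorem sq_mul_log_card_Ico_lt_layerSize {N m : ℕ} (hm : 1 < m) :
    (Nat.log m N + 1 : ℝ) ^ 2 * Real.log #(Ico m (m ^ 2)) < layerSize N m := by
  have hcard : 0 < #(Ico m (m ^ 2)) := card_pos.2 (nonempty_Ico.2 (lt_self_pow₀ hm one_lt_two))
  have hlog : Real.log #(Ico m (m ^ 2)) ≤ 2 * Real.log m := by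
    have hle : (#(Ico m (m ^ 2)) : ℝ) ≤ (m : ℝ) ^ 2 := by
      rw [Nat.card_Ico]
      exact_mod_cast Nat.sub_le (m ^ 2) m
    exact (Real.log_le_log (by exact_mod_cast hcard) hle).trans_eq (by simp [Real.log_pow])
  rw [layerSize, Nat.cast_add_one]
  exact (mul_le_mul_of_nonneg_left hlog (by positivity)).trans_lt (Nat.lt_floor_add_one _)

theorem layerSize_le {N m : ℕ} (hm : 1 < m) :
    (layerSize N m : ℝ) ≤
      2 * Real.log N ^ 2 / Real.log m + (4 * Real.log N + 1) + 2 * Real.log m := by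
  have hlog : 0 < Real.log m := Real.log_pos (by exact_mod_cast hm)
  calc (layerSize N m : ℝ) ≤ (Nat.log m N + 1) ^ 2 * (2 * Real.log m) + 1 := by
        rw [layerSize, Nat.cast_add_one]
        gcongr
        exact Nat.floor_le (by positivity)
    _ ≤ (Real.log N / Real.log m + 1) ^ 2 * (2 * Real.log m) + 1 := by
        gcongr
        exact Real.natLog_le_logb N m
    _ = 2 * Real.log N ^ 2 / Real.log m + (4 * Real.log N + 1) + 2 * Real.log m := by
        field_simp
        ring

theorem sum_layerSize_le {N y : ℕ} (hy : 1 < y) (J : ℕ) :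
    ∑ j ∈ range J, (layerSize N (y ^ 2 ^ j) : ℝ) ≤
      4 * Real.log N ^ 2 / Real.log y + J * (4 * Real.log N + 1) + 2 ^ (J + 1) * Real.log y := by
  have hlog : 0 < Real.log y := Real.log_pos (by exact_mod_cast hy)
  have hterm : ∀ j ∈ range J, (layerSize N (y ^ 2 ^ j) : ℝ) ≤
      2 * Real.log N ^ 2 / Real.log y * (1 / 2) ^ j + (4 * Real.log N + 1) +
        2 * Real.log y * 2 ^ j := fun j _ => by
    refine (layerSize_le (one_lt_pow₀ hy (by positivity))).trans_eq ?_
    rw [Nat.cast_pow, Real.log_pow]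
    rw [one_div_pow]
    push_cast
    field_simp
  have hgeom : ∑ j ∈ range J, (2 : ℝ) ^ j ≤ 2 ^ J := by
    rw [geom_sum_eq (by norm_num)]
    norm_num
  calc ∑ j ∈ range J, (layerSize N (y ^ 2 ^ j) : ℝ)
      ≤ 2 * Real.log N ^ 2 / Real.log y * ∑ j ∈ range J, (1 / 2 : ℝ) ^ j
          + J * (4 * Real.log N + 1) + 2 * Real.log y * ∑ j ∈ range J, (2 : ℝ) ^ j := by
        refine (sum_le_sum hterm).trans_eq ?_
        rw [sum_add_distrib, sum_add_distrib, mul_sum, mul_sum, sum_const, card_range, nsmul_eq_mul]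
    _ ≤ 2 * Real.log N ^ 2 / Real.log y * 2 + J * (4 * Real.log N + 1)
          + 2 * Real.log y * 2 ^ J := by
        gcongr
        exact sum_geometric_two_le J
    _ = _ := by ring

theorem divDim_le_of_lt_pow_two_pow {N y J : ℕ} (hy : 1 < y) (hJ : N < y ^ 2 ^ J)
    (hS : S ⊆ Set.Icc 1 N) :
    (divDim S : ℝ) ≤ y + 4 * Real.log N ^ 2 / Real.log y + J * (4 * Real.log N + 1)
      + 2 ^ (J + 1) * Real.log y := by
  have hS₀ : 0 ∉ S := fun h => absurd (hS h).1 (by norm_num)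
  have hpow : ∀ j, 1 < y ^ 2 ^ j := fun j => one_lt_pow₀ hy (by positivity)
  have hdim : divDim S ≤ #(range y) + ∑ j : Fin J, layerSize N (y ^ 2 ^ (j : ℕ)) := by
    refine divDim_le_card_add_sum hS₀ (range y)
      (fun j : Fin J => Ico (y ^ 2 ^ (j : ℕ)) ((y ^ 2 ^ (j : ℕ)) ^ 2))
      (fun j => Nat.log (y ^ 2 ^ (j : ℕ)) N) _ (fun x hx p hp => ?_)
      (fun j x hx => card_primeFactors_inter_Ico_le_log (hpow j)
        (ne_of_mem_of_not_mem hx hS₀) (hS hx).2 _)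
      fun j => sq_mul_log_card_Ico_lt_layerSize (hpow j)
    rcases lt_or_ge p y with hpy | hyp
    · exact Or.inl (mem_range.2 hpy)
    · have hpN : p ≤ N := (Nat.le_of_mem_primeFactors hp).trans (hS hx).2
      have hp_mem : p ∈ Set.Ico (y ^ 2 ^ 0) (y ^ 2 ^ J) := ⟨by simpa, hpN.trans_lt hJ⟩
      obtain ⟨j, hj, hpj⟩ := Set.mem_iUnion₂.1
        (Ico_subset_biUnion_Ico J (fun j => y ^ 2 ^ j) hp_mem)
      refine Or.inr ⟨⟨j, by simpa using hj⟩, ?_⟩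
      rwa [← pow_mul, ← pow_succ, ← mem_coe, coe_Ico]
  calc (divDim S : ℝ) ≤ y + ∑ j ∈ range J, (layerSize N (y ^ 2 ^ j) : ℝ) := by
        rw [card_range, Fin.sum_univ_eq_sum_range fun j => layerSize N (y ^ 2 ^ j)] at hdim
        exact_mod_cast hdim
    _ ≤ _ := by linarith [sum_layerSize_le (N := N) hy J]

theorem divDim_le_of_subset_Icc {N : ℕ} (hN : Real.exp 1 ≤ Real.log N) (hS : S ⊆ Set.Icc 1 N) :
    (divDim S : ℝ) ≤ 4 * Real.log N ^ 2 / Real.log (Real.log N)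
      + 25 * (Real.log N * Real.log (Real.log N)) := by
  set Λ := Real.log N
  set l := Real.log Λ
  have hΛ : 2 < Λ := by linarith [Real.exp_one_gt_d9]
  have hl : 1 ≤ l := (Real.le_log_iff_exp_le (by linarith)).2 hN
  have hN₀ : 0 < (N : ℝ) := by
    rw [Nat.cast_pos, Nat.pos_iff_ne_zero]
    rintro rfl
    norm_num [Λ] at hΛ
  obtain ⟨m, hmΛ, hΛm⟩ := exists_nat_pow_near (by linarith : 1 ≤ Λ) one_lt_two
  have hm : m ≤ 2 * l := by
    have := Real.log_le_log (by positivity) hmΛ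
    rw [Real.log_pow] at this
    nlinarith [Real.log_two_gt_d9, Nat.cast_nonneg (α := ℝ) m]
  have hy : 1 < ⌈Λ⌉₊ := Nat.lt_ceil.2 (by rw [Nat.cast_one]; linarith)
  have hy_ge : l ≤ Real.log ⌈Λ⌉₊ := Real.log_le_log (by linarith) (Nat.le_ceil Λ)
  have hy_le : (⌈Λ⌉₊ : ℝ) ≤ Λ + 1 := (Nat.ceil_lt_add_one (by linarith)).le
  have hlogy_le : Real.log ⌈Λ⌉₊ ≤ 2 * l := by
    rw [← Nat.cast_two, ← Real.log_pow]
    exact Real.log_le_log (by positivity) (by nlinarith)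
  have hJ : N < ⌈Λ⌉₊ ^ 2 ^ (m + 1) := by
    rify
    rw [← Real.log_lt_log_iff hN₀ (by positivity), Real.log_pow]
    push_cast
    nlinarith
  have hfirst : 4 * Λ ^ 2 / Real.log ⌈Λ⌉₊ ≤ 4 * Λ ^ 2 / l := by gcongr
  have hsecond : ((m + 1 : ℕ) : ℝ) * (4 * Λ + 1) ≤ 3 * l * (5 * Λ) := by
    push_cast
    gcongr <;> linarith
  have hthird : 2 ^ (m + 1 + 1) * Real.log ⌈Λ⌉₊ ≤ 4 * Λ * (2 * l) := by
    gcongr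
    linarith [pow_succ (2 : ℝ) m, pow_succ (2 : ℝ) (m + 1)]
  have hΛl : Λ ≤ Λ * l := le_mul_of_one_le_right (by linarith) hl
  linarith [divDim_le_of_lt_pow_two_pow hy hJ hS]

theorem eventually_forall_subset_Icc_divDim_le {C : ℝ} (hC : 4 < C) :
    ∀ᶠ N : ℕ in atTop, ∀ S ⊆ Set.Icc 1 N,
      (divDim S : ℝ) ≤ C * (Real.log N ^ 2 / Real.log (Real.log N)) := by
  have hlog : Tendsto (fun N : ℕ => Real.log N) atTop atTop :=
    Real.tendsto_log_atTop.comp tendsto_natCast_atTop_atTop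
  have hsmall := (Real.isLittleO_pow_log_id_atTop (n := 2)).bound
    (show 0 < (C - 4) / 25 by linarith)
  filter_upwards [hlog.eventually hsmall, hlog.eventually_ge_atTop (Real.exp 1)]
    with N hsmallN hN S hS
  set Λ := Real.log N
  have hΛ : 0 < Λ := (Real.exp_pos 1).trans_le hN
  have hl : 0 < Real.log Λ := zero_lt_one.trans_le ((Real.le_log_iff_exp_le hΛ).2 hN)
  rw [Real.norm_of_nonneg (by positivity), id, Real.norm_of_nonneg hΛ.le] at hsmallN
  refine (divDim_le_of_subset_Icc hN hS).trans ?_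
  rw [← mul_div_assoc, le_div_iff₀ hl, add_mul, div_mul_cancel₀ _ hl.ne']
  nlinarith

theorem isEquivalent_log_mul_add (ha : a ≠ 0) (b : ℕ) :
    (fun n : ℕ => Real.log (a * n + b : ℕ)) ~[atTop] fun n => Real.log n := by
  have ha₀ : (0 : ℝ) < a := by positivity
  have hcast : Tendsto (fun n : ℕ => (n : ℝ)) atTop atTop := tendsto_natCast_atTop_atTop
  have hmul : Tendsto (fun n : ℕ => (a : ℝ) * n) atTop atTop := hcast.const_mul_atTop ha₀
  have hadd : (fun n : ℕ => ((a * n + b : ℕ) : ℝ)) ~[atTop] fun n => (a : ℝ) * n := by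
    push_cast
    exact IsEquivalent.refl.add_isLittleO (isLittleO_const_left.2
      (Or.inr (tendsto_norm_atTop_atTop.comp hmul)))
  refine (hadd.log hmul).trans ?_
  have hconst : (fun _ : ℕ => Real.log a) =o[atTop] fun n : ℕ => Real.log n :=
    Real.isLittleO_const_log_atTop.comp_tendsto hcast
  refine (IsEquivalent.refl.add_isLittleO hconst).congr_left ?_
  filter_upwards [eventually_ne_atTop 0] with n hn
  rw [Pi.add_apply, Real.log_mul ha₀.ne' (by exact_mod_cast hn), add_comm]

theorem eventually_divDim_arithProg_le (ha : a ≠ 0) (hb : b ≠ 0) {C : ℝ} (hC : 4 < C) :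
    ∀ᶠ n : ℕ in atTop,
      (divDim (arithProg a b n) : ℝ) ≤ C * Real.log n ^ 2 / Real.log (Real.log n) := by
  obtain ⟨C', hC', hC'C⟩ := exists_between hC
  have hlog : Tendsto (fun n : ℕ => Real.log n) atTop atTop :=
    Real.tendsto_log_atTop.comp tendsto_natCast_atTop_atTop
  have hequiv := isEquivalent_log_mul_add ha b
  have hratio := ((hequiv.pow 2).div (hequiv.log hlog)).isLittleO.bound
    (show 0 < C / C' - 1 by rw [sub_pos, one_lt_div (by linarith)]; exact hC'C)
  have hprog : Tendsto (fun n => a * n + b) atTop atTop :=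
    tendsto_atTop_mono (fun n => le_add_right (Nat.le_mul_of_pos_left n (Nat.pos_of_ne_zero ha)))
      tendsto_id
  filter_upwards [hprog.eventually (eventually_forall_subset_Icc_divDim_le hC'), hratio,
    hlog.eventually_gt_atTop 1] with n hdim hn hL
  have hl : 0 < Real.log (Real.log n) := Real.log_pos hL
  simp only [Pi.sub_apply, Pi.div_apply, Pi.pow_apply] at hn
  rw [Real.norm_of_nonneg (r := Real.log n ^ 2 / _) (by positivity)] at hn
  calc (divDim (arithProg a b n) : ℝ)
      ≤ C' * (Real.log (a * n + b : ℕ) ^ 2 / Real.log (Real.log (a * n + b : ℕ))) :=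
        hdim _ (arithProg_subset_Icc hb)
    _ ≤ C' * (C / C' * (Real.log n ^ 2 / Real.log (Real.log n))) := by
        gcongr
        linarith [le_of_abs_le hn]
    _ = C * Real.log n ^ 2 / Real.log (Real.log n) := by
        field_simp

/-- For fixed positive integers `a, b`, for every `ε > 0` and all large `n`,
`(1/16 - ε) (log n)²/(log log n)² ≤ dim(D_{a[n]+b}) ≤ (4 + ε) (log n)²/log log n`. -/
theorem divDim_arith_prog_bounds (a b : ℕ) (ha : 1 ≤ a) (hb : 1 ≤ b) :
    ∀ ε : ℝ, 0 < ε → ∃ N : ℕ, ∀ n : ℕ, N ≤ n →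
      (1 / 16 - ε) * (Real.log n) ^ 2 / (Real.log (Real.log n)) ^ 2
          ≤ (divDim {m : ℕ | ∃ k : ℕ, 1 ≤ k ∧ k ≤ n ∧ m = a * k + b} : ℝ) ∧
        (divDim {m : ℕ | ∃ k : ℕ, 1 ≤ k ∧ k ≤ n ∧ m = a * k + b} : ℝ)
          ≤ (4 + ε) * (Real.log n) ^ 2 / Real.log (Real.log n) := by
  intro ε hε
  have ha₀ : a ≠ 0 := Nat.one_le_iff_ne_zero.1 ha
  have hb₀ : b ≠ 0 := Nat.one_le_iff_ne_zero.1 hb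
  have hlower := eventually_le_divDim_arithProg ha₀ hb₀ (sub_lt_self (1 / 16) hε)
  have hupper := eventually_divDim_arithProg_le ha₀ hb₀ (lt_add_of_pos_right 4 hε)
  exact eventually_atTop.1 (hlower.and hupper)
end
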